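/- arXiv:2603.13914 — 2 statements merged into one kernel-verified Lean document; each statement's English description precedes it below -/
import Mathlib

section
/- Let s be a sequence of length L = R·C over n-th roots of unity whose R × C array is S_{i,j} = ω^{p(i,j)} with ω = e^{2πi/n} and p ∈ ℤ[x,y]. If s possesses the Array Orthogonality Property for divisor C, then R ≤ n. -/
/-- Periodic cross-correlation of two length-`R` sequences. -/
noncomputable def xcorr (R : ℕ) (a b : ℕ → ℂ) (τ : ℕ) : ℂ :=
  ∑ i ∈ Finset.range R, a i * (starRingEnd ℂ) (b ((i + τ) % R))

/-- The Array Orthogonality Property for an `R × C` array `S`. -/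
def AOP (R C : ℕ) (S : ℕ → ℕ → ℂ) : Prop :=
  (∀ τ j₀ j₁ : ℕ, j₀ < C → j₁ < C → j₀ ≠ j₁ →
      xcorr R (fun i => S i j₀) (fun i => S i j₁) τ = 0) ∧
  (∀ τ : ℕ, ¬ (R ∣ τ) →
      ∑ j ∈ Finset.range C, xcorr R (fun i => S i j) (fun i => S i j) τ = 0)

/-!
The Fourier transforms of the columns have disjoint supports, and where one of them is nonzero its
modulus is `√(RC)`; so all supports have size `R / C`, and `C ∣ R`.

Suppose `n < R`, and put `n = dN` and `R = dR'` with `N` and `R'` coprime. Every column is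
`n`-periodic, so its autocorrelation at shift `n` is `R - n` plus the sum of the quotients
`s (i + R) / s i` over `i < n`. If all columns were `R`-periodic, these autocorrelations would add
up to `CR` instead of `0`; hence `N ≠ 1`. The quotients are again of the form `η ^ r(i)`, and modulo
a prime above a prime divisor `q` of `N` their sums over a period vanish, which gives `q ∣ C ∣ R`.

The polynomial with coefficients `s i - s (i + R)` for `i < n` has Fourier support inside that of
the column `s`, so the product of those of two columns is divisible by `X ^ R - 1`. Modulo a prime
above `q` their coefficients have period `n / q`, and this forces one of the two to vanish. Thus all
columns but one are `R`-periodic, the sum of the autocorrelations at shift `n` has real part at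
least `CR - 2n`, and `CR ≤ 2n < 2R` contradicts `q ∣ C`.
-/

open Finset Polynomial

section PeriodicSums

variable {A : Type*} [AddCommMonoid A]

lemma sum_range_add_of_periodic {g : ℕ → A} {R : ℕ} (hg : Function.Periodic g R) (i : ℕ) :
    ∑ τ ∈ range R, g (i + τ) = ∑ τ ∈ range R, g τ := by
  induction i with
  | zero => simp only [zero_add]
  | succ i ih =>
    rw [← ih]
    cases R with
    | zero => rfl
    | succ m =>
      rw [sum_range_succ, sum_range_succ']
      simp only [add_right_comm i 1, ← add_assoc, add_zero]
      rw [add_assoc i m 1, hg i]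

lemma sum_range_mul_of_periodic {g : ℕ → A} {K : ℕ} (hg : Function.Periodic g K) (c : ℕ) :
    ∑ i ∈ range (K * c), g i = c • ∑ i ∈ range K, g i := by
  induction c with
  | zero => simp
  | succ c ih =>
    have hblock : ∀ x, g (K * c + x) = g x := fun x => by
      rw [add_comm, mul_comm]; exact hg.nat_mul c x
    rw [Nat.mul_succ, sum_range_add, ih, succ_nsmul]
    simp only [hblock]

end PeriodicSums

section GeneratingPolynomials

/-- The generating polynomial `∑_{i < n} a i X ^ i` of the first `n` terms of a sequence; its value
at an `n`-th root of unity is a discrete Fourier coefficient of those terms. -/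
noncomputable def genPoly {A : Type*} [Semiring A] (n : ℕ) (a : ℕ → A) : A[X] :=
  ∑ i ∈ range n, monomial i (a i)

section Semiring

variable {A : Type*} [Semiring A] {n : ℕ} {a : ℕ → A}

lemma coeff_genPoly (n : ℕ) (a : ℕ → A) (i : ℕ) :
    (genPoly n a).coeff i = if i < n then a i else 0 := by
  simp [genPoly, coeff_monomial]

lemma eval_genPoly (n : ℕ) (a : ℕ → A) (ξ : A) :
    (genPoly n a).eval ξ = ∑ i ∈ range n, a i * ξ ^ i := by
  simp [genPoly, eval_finsetSum]

lemma natDegree_genPoly_lt (hn : n ≠ 0) (a : ℕ → A) : (genPoly n a).natDegree < n := by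
  have : (genPoly n a).natDegree ≤ n - 1 :=
    natDegree_le_iff_coeff_eq_zero.mpr fun i hi => by rw [coeff_genPoly, if_neg (by omega)]
  omega

lemma genPoly_ne_zero {i : ℕ} (hi : i < n) (ha : a i ≠ 0) : genPoly n a ≠ 0 := fun h => ha <| by
  simpa [hi, h] using (coeff_genPoly n a i).symm

lemma genPoly_mul_of_periodic {M : ℕ} (ha : Function.Periodic a M) (c : ℕ) :
    genPoly (M * c) a = genPoly M a * ∑ t ∈ range c, (X ^ M) ^ t := by
  induction c with
  | zero => simp [genPoly]
  | succ c ih =>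
    have hblock : ∀ x, a (M * c + x) = a x := fun x => by
      rw [add_comm, mul_comm]; exact ha.nat_mul c x
    rw [sum_range_succ, mul_add (genPoly M a), ← ih]
    simp only [genPoly, sum_mul, Nat.mul_succ, sum_range_add, hblock]
    simp only [← pow_mul, monomial_mul_X_pow, add_comm]

lemma exists_eq_mul_geom_sum_of_coeff_periodic {M c : ℕ} {f : A[X]} (hdeg : f.natDegree < M * c)
    (hper : ∀ i, i + M < M * c → f.coeff (i + M) = f.coeff i) :
    ∃ g : A[X], g.natDegree < M ∧ f = g * ∑ t ∈ range c, (X ^ M) ^ t := by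
  have hM : M ≠ 0 := by rintro rfl; simp at hdeg
  have hmod : ∀ i < M * c, f.coeff i = f.coeff (i % M) := by
    intro i
    induction i using Nat.strong_induction_on with
    | _ i ih =>
      intro hi
      rcases lt_or_ge i M with hiM | hMi
      · rw [Nat.mod_eq_of_lt hiM]
      · obtain ⟨j, rfl⟩ := Nat.exists_eq_add_of_le' hMi
        rw [hper j hi, Nat.add_mod_right, ih j (by omega) (by omega)]
  refine ⟨genPoly M fun i => f.coeff (i % M), natDegree_genPoly_lt hM _, ?_⟩
  rw [← genPoly_mul_of_periodic (fun i => by rw [Nat.add_mod_right])]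
  exact (f.as_sum_range' _ hdeg).trans
    (sum_congr rfl fun i hi => by rw [hmod i (mem_range.mp hi)])

end Semiring

lemma eval_genPoly_sub_shift {A : Type*} [CommRing A] {n R : ℕ} {s : ℕ → A}
    (hs : Function.Periodic s n) {ξ : A} (hξ : ξ ^ R = 1) :
    (genPoly n fun i => s i - s (i + R)).eval ξ = (1 - ξ ^ n) * (genPoly R s).eval ξ := by
  simp only [eval_genPoly, sub_mul, sum_sub_distrib, one_mul, mul_sum]
  have hn := sum_range_add (fun i => s i * ξ ^ i) n R
  have hR := sum_range_add (fun i => s i * ξ ^ i) R n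
  have hshift_n : ∀ x, s (n + x) * ξ ^ (n + x) = ξ ^ n * (s x * ξ ^ x) := fun x => by
    rw [add_comm n x, hs x]; ring
  have hshift_R : ∀ x, s (R + x) * ξ ^ (R + x) = s (x + R) * ξ ^ x := fun x => by
    rw [pow_add, hξ, one_mul, add_comm]
  simp only [hshift_n] at hn
  simp only [hshift_R] at hR
  rw [add_comm R n, hn] at hR
  linear_combination hR

lemma genPoly_sub_shift_ne_zero {A : Type*} [Ring A] {n R : ℕ} (hn : 0 < n) {s : ℕ → A}
    (hs : Function.Periodic s n) (hsR : ¬ Function.Periodic s R) :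
    genPoly n (fun i => s i - s (i + R)) ≠ 0 := by
  obtain ⟨i, hi⟩ := not_forall.mp hsR
  refine genPoly_ne_zero (Nat.mod_lt i hn) (sub_ne_zero.mpr fun h => hi ?_)
  have hshift : s (i % n + R) = s (i + R) := by
    rw [← hs.map_mod_nat (i + R), ← hs.map_mod_nat (i % n + R), Nat.mod_add_mod]
  rw [← hshift, ← h, hs.map_mod_nat]

lemma sum_eval_genPoly_pow {A : Type*} [CommRing A] [IsDomain A] {R : ℕ} {ζ : A}
    (hζ : IsPrimitiveRoot ζ R) (a : ℕ → A) :
    ∑ k ∈ range R, (genPoly R a).eval (ζ ^ k) = R * a 0 := by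
  have hgeom : ∀ i < R, i ≠ 0 → ∑ k ∈ range R, (ζ ^ i) ^ k = 0 := by
    intro i hi hi0
    have hprod := geom_sum_mul (ζ ^ i) R
    rw [pow_right_comm, hζ.pow_eq_one, one_pow, sub_self] at hprod
    exact (mul_eq_zero.mp hprod).resolve_right
      (sub_ne_zero.mpr (hζ.pow_ne_one_of_pos_of_lt hi0 hi))
  simp only [eval_genPoly]
  rw [sum_comm]
  simp only [← mul_sum, pow_right_comm ζ _ _]
  rcases Nat.eq_zero_or_pos R with rfl | hR
  · simp
  rw [sum_eq_single_of_mem 0 (mem_range.mpr hR)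
    fun i hi hi0 => by rw [hgeom i (mem_range.mp hi) hi0, mul_zero]]
  simp [mul_comm]

end GeneratingPolynomials

section TwistedPeriodicity

/-- The polynomial `f` has degree less than `n`, and its coefficients `M` apart in that range differ
by a factor that is a `q`-th root of unity. For `q = 1` this is `M`-periodicity. -/
structure IsTwistedPeriodic {k : Type*} [Semiring k] (q M n : ℕ) (f : k[X]) : Prop where
  natDegree_lt : f.natDegree < n
  exists_coeff_add : ∀ i, i + M < n → ∃ v : k, v ^ q = 1 ∧ f.coeff (i + M) = v * f.coeff i

lemma isTwistedPeriodic_genPoly {k : Type*} [Semiring k] {q M n : ℕ} (hn : n ≠ 0) {a : ℕ → k}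
    (ha : ∀ i, ∃ v : k, v ^ q = 1 ∧ a (i + M) = v * a i) :
    IsTwistedPeriodic q M n (genPoly n a) where
  natDegree_lt := natDegree_genPoly_lt hn a
  exists_coeff_add i hi := by
    simpa only [coeff_genPoly, if_pos hi, if_pos (show i < n by omega)] using ha i

lemma IsTwistedPeriodic.of_C_mul {k : Type*} [Field k] {q M n : ℕ} {f : k[X]} {c : k} (hc : c ≠ 0)
    (hf : IsTwistedPeriodic q M n (C c * f)) : IsTwistedPeriodic q M n f where
  natDegree_lt := natDegree_C_mul hc ▸ hf.natDegree_lt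
  exists_coeff_add i hi := by
    obtain ⟨v, hv, hcoeff⟩ := hf.exists_coeff_add i hi
    refine ⟨v, hv, mul_left_cancel₀ hc ?_⟩
    rw [← coeff_C_mul, hcoeff, coeff_C_mul, mul_left_comm]

lemma IsTwistedPeriodic.exists_eq_mul_geom_sum {k : Type*} [Semiring k] {M c : ℕ} {f : k[X]}
    (hf : IsTwistedPeriodic 1 M (M * c) f) :
    ∃ e : k[X], e.natDegree < M ∧ f = e * ∑ t ∈ range c, (X ^ M) ^ t := by
  refine exists_eq_mul_geom_sum_of_coeff_periodic hf.natDegree_lt fun i hi => ?_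
  obtain ⟨v, hv, hcoeff⟩ := hf.exists_coeff_add i hi
  rw [hcoeff, ← pow_one v, hv, one_mul]

section Periodicity

variable {k : Type*} [Field k]

lemma natDegree_geom_sum_X (m : ℕ) : (∑ t ∈ range m, X ^ t : k[X]).natDegree = m - 1 := by
  cases m with
  | zero => simp
  | succ m =>
    have hmonic : (∑ t ∈ range (m + 1), X ^ t : k[X]).Monic := monic_geom_sum_X m.succ_ne_zero
    have h := congrArg natDegree (geom_sum_mul (X : k[X]) (m + 1))
    rw [← C_1, hmonic.natDegree_mul (monic_X_sub_C 1), natDegree_X_sub_C,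
      natDegree_X_pow_sub_C] at h
    omega

lemma isCoprime_geom_sum_X_pow_sub_one {m N : ℕ} (hcop : m.Coprime N) (hm : (m : k) ≠ 0) :
    IsCoprime (∑ t ∈ range m, X ^ t : k[X]) (X ^ N - 1) := by
  rw [isCoprime_iff_aeval_ne_zero_of_isAlgClosed k (AlgebraicClosure k)]
  intro z
  by_contra! hroot
  obtain ⟨hz_sum, hz_pow⟩ := hroot
  simp only [map_sum, map_sub, map_pow, aeval_X, map_one] at hz_sum hz_pow
  have hzm : z ^ m = 1 := by
    rw [← sub_eq_zero, ← geom_sum_mul, hz_sum, zero_mul]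
  have hz : z = 1 := by
    simpa [hcop.gcd_eq_one] using pow_gcd_eq_one.mpr ⟨hzm, sub_eq_zero.mp hz_pow⟩
  apply hm
  apply (algebraMap k (AlgebraicClosure k)).injective
  simpa [hz] using hz_sum

/-- The polynomial `(X ^ (d * R') - 1) / (X ^ d - 1)` is coprime to the factor of `X ^ (d * N) - 1`
that `f` and `g` share by periodicity, and too large to divide the product of their cofactors. -/
theorem not_X_pow_sub_one_dvd_mul_of_periodic {d N R' M c : ℕ} (hcop : R'.Coprime N) (hlt : N < R')
    (hR' : (R' : k) ≠ 0) (hMc : M * c = d * N) (hc : 2 ≤ c) {f g : k[X]} (hf0 : f ≠ 0) (hg0 : g ≠ 0)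
    (hf : IsTwistedPeriodic 1 M (d * N) f) (hg : IsTwistedPeriodic 1 M (d * N) g) :
    ¬ (X ^ (d * R') - 1 : k[X]) ∣ f * g := by
  intro hdvd
  rw [← hMc] at hf hg
  obtain ⟨e, he, rfl⟩ := hf.exists_eq_mul_geom_sum
  obtain ⟨e', he', rfl⟩ := hg.exists_eq_mul_geom_sum
  set G : k[X] := ∑ t ∈ range c, (X ^ M) ^ t
  set P : k[X] := expand k d (∑ t ∈ range R', X ^ t)
  have hP_dvd_X_pow : P ∣ X ^ (d * R') - 1 := ⟨X ^ d - 1, by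
    simpa [P, pow_mul] using (geom_sum_mul (X ^ d : k[X]) R').symm⟩
  have hG_dvd_X_pow : G ∣ X ^ (d * N) - 1 := ⟨X ^ M - 1, by
    rw [← hMc, pow_mul, geom_sum_mul]⟩
  have hPG : IsCoprime P G := by
    have hexpand := (isCoprime_geom_sum_X_pow_sub_one hcop hR').map (expand k d : k[X] →+* k[X])
    simp only [RingHom.coe_coe, map_sub, map_pow, expand_X, map_one, ← pow_mul] at hexpand
    exact hexpand.of_isCoprime_of_dvd_right hG_dvd_X_pow
  have hP_dvd : P ∣ e * e' := by
    refine (hPG.pow_right (n := 2)).dvd_of_dvd_mul_right ?_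
    convert hP_dvd_X_pow.trans hdvd using 1
    ring
  have hP_degree : P.natDegree = (R' - 1) * d := by
    rw [natDegree_expand, natDegree_geom_sum_X]
  have hdegree := natDegree_le_of_dvd hP_dvd
    (mul_ne_zero (left_ne_zero_of_mul hf0) (left_ne_zero_of_mul hg0))
  rw [hP_degree] at hdegree
  have hN_le : N * d ≤ (R' - 1) * d := Nat.mul_le_mul_right d (Nat.le_pred_of_lt hlt)
  have hM_le : M * 2 ≤ M * c := Nat.mul_le_mul_left M hc
  have := natDegree_mul_le (p := e) (q := e')
  rw [hMc, mul_comm d] at hM_le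
  omega

end Periodicity

section ResidueCharacteristic

variable {K : Type*} [Field K]

variable (K) in
lemma exists_valuationSubring_charP_residueField [CharZero K] {q : ℕ}
    (hq : q.Prime) : ∃ V : ValuationSubring K, CharP (IsLocalRing.ResidueField V) q := by
  let Z : Subring K := (Int.castRingHom K).range
  have hproper : Ideal.span {(q : Z)} ≠ ⊤ := by
    rw [Ne, Ideal.span_singleton_eq_top, isUnit_iff_dvd_one]
    rintro ⟨⟨_, z, rfl⟩, hz⟩
    have hz_K : (1 : K) = q * z := by simpa using congrArg Subtype.val hz
    have hz_int : (1 : ℤ) = q * z := by exact_mod_cast hz_K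
    exact hq.one_lt.ne' (Nat.dvd_one.mp (by exact_mod_cast Dvd.intro z hz_int.symm))
  obtain ⟨V, -, hV⟩ := Ideal.image_subset_nonunits_valuationSubring _ hproper
  have hqV : ((q : V) : K) ∈ V.nonunits :=
    hV ⟨(q : Z), Ideal.mem_span_singleton_self _, by simp⟩
  rw [ValuationSubring.coe_mem_nonunits_iff, ← IsLocalRing.residue_eq_zero_iff, map_natCast] at hqV
  have := Fact.mk hq
  exact ⟨V, (CharP.charP_iff_prime_eq_zero hq).mpr hqV⟩

lemma mem_valuationSubring_of_pow_eq_one (V : ValuationSubring K) {x : K} {n : ℕ} (hn : n ≠ 0)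
    (hx : x ^ n = 1) : x ∈ V := by
  rw [← V.valuation_le_one_iff, ← pow_le_one_iff hn, ← map_pow, hx, map_one]

lemma residue_eq_one_of_pow_eq_one {A : Type*} [CommRing A] [IsLocalRing A] {q : ℕ} (hq : q.Prime)
    [CharP (IsLocalRing.ResidueField A) q] {x : A} (hx : x ^ q = 1) :
    IsLocalRing.residue A x = 1 := by
  have := Fact.mk hq
  have := ExpChar.pow_prime_pow_mul_eq_one_iff q 1 1 (IsLocalRing.residue A x)
  simpa [← map_pow, hx] using this

lemma residue_eq_residue_of_coe_eq_mul {V : ValuationSubring K} {q : ℕ} (hq : q.Prime)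
    [CharP (IsLocalRing.ResidueField V) q] {a b : V} {v : K} (hv : v ^ q = 1)
    (hab : (b : K) = v * a) : IsLocalRing.residue V b = IsLocalRing.residue V a := by
  let w : V := ⟨v, mem_valuationSubring_of_pow_eq_one V hq.ne_zero hv⟩
  have hw : w ^ q = 1 := Subtype.ext hv
  have hbw : b = w * a := Subtype.ext hab
  rw [hbw, map_mul, residue_eq_one_of_pow_eq_one hq hw, one_mul]

lemma exists_eq_C_mul_map_residue_ne_zero (V : ValuationSubring K) {f : K[X]} (hf : f ≠ 0) :
    ∃ c : K, c ≠ 0 ∧ ∃ F : V[X], f = C c * F.map V.subtype ∧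
      F.map (IsLocalRing.residue V) ≠ 0 := by
  obtain ⟨m, hm, hmax⟩ := exists_max_image f.support (fun i => V.valuation (f.coeff i))
    (nonempty_support_iff.mpr hf)
  have hc : f.coeff m ≠ 0 := mem_support_iff.mp hm
  have hlift : C (f.coeff m)⁻¹ * f ∈ lifts V.subtype := by
    rw [lifts_iff_coeff_lifts]
    intro i
    have hi : V.valuation (f.coeff i) ≤ V.valuation (f.coeff m) := by
      by_cases hi : i ∈ f.support
      · exact hmax i hi
      · rw [notMem_support_iff.mp hi, map_zero]; exact zero_le
    obtain ⟨a, ha⟩ := (V.valuation_le_iff _ _).mp hi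
    refine ⟨a, ?_⟩
    rw [coeff_C_mul, ← ha, mul_comm, mul_assoc, mul_inv_cancel₀ hc, mul_one]
    rfl
  obtain ⟨F, hF⟩ := (mem_lifts _).mp hlift
  refine ⟨f.coeff m, hc, F, ?_, fun hzero => ?_⟩
  · rw [hF, ← mul_assoc, ← C_mul, mul_inv_cancel₀ hc, C_1, one_mul]
  · have hFm : F.coeff m = 1 := V.subtype_injective <| by
      rw [← coeff_map, hF, coeff_C_mul, inv_mul_cancel₀ hc, map_one]
    simpa [hFm] using congrArg (coeff · m) hzero

lemma IsTwistedPeriodic.map_residue {V : ValuationSubring K} {q M n : ℕ} (hq : q.Prime)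
    [CharP (IsLocalRing.ResidueField V) q] {F : V[X]}
    (hF : IsTwistedPeriodic q M n (F.map V.subtype)) :
    IsTwistedPeriodic 1 M n (F.map (IsLocalRing.residue V)) where
  natDegree_lt := natDegree_map_le.trans_lt <|
    natDegree_map_eq_of_injective V.subtype_injective F ▸ hF.natDegree_lt
  exists_coeff_add i hi := by
    obtain ⟨v, hv, hcoeff⟩ := hF.exists_coeff_add i hi
    exact ⟨1, one_pow 1, by
      rw [coeff_map, coeff_map, one_mul]
      exact residue_eq_residue_of_coe_eq_mul hq hv (by simpa using hcoeff)⟩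

/-- Reducing modulo a prime above `q` turns `q`-th roots of unity into `1`, hence twisted
periodicity into periodicity. -/
theorem IsTwistedPeriodic.not_X_pow_sub_one_dvd_mul [CharZero K] {q M d N R' : ℕ} (hq : q.Prime)
    (hcop : R'.Coprime N) (hlt : N < R') (hqR' : ¬ q ∣ R') (hMq : M * q = d * N) {f g : K[X]}
    (hf0 : f ≠ 0) (hg0 : g ≠ 0)
    (hf : IsTwistedPeriodic q M (d * N) f) (hg : IsTwistedPeriodic q M (d * N) g) :
    ¬ (X ^ (d * R') - 1 : K[X]) ∣ f * g := by
  obtain ⟨V, _⟩ := exists_valuationSubring_charP_residueField K hq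
  obtain ⟨c, hc, F, rfl, hF0⟩ := exists_eq_C_mul_map_residue_ne_zero V hf0
  obtain ⟨c', hc', G, rfl, hG0⟩ := exists_eq_C_mul_map_residue_ne_zero V hg0
  intro hdvd
  have hd : d ≠ 0 := by
    rintro rfl
    simpa using hf.natDegree_lt
  have hmonic : (X ^ (d * R') - 1 : V[X]).Monic :=
    monic_X_pow_sub_C 1 (mul_ne_zero hd (by omega))
  have hdvd_V : (X ^ (d * R') - 1 : V[X]) ∣ F * G := by
    rw [← map_dvd_map V.subtype V.subtype_injective hmonic]
    rw [mul_mul_mul_comm, ← C_mul] at hdvd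
    simpa using (dvd_C_mul (mul_ne_zero hc hc')).mp hdvd
  refine not_X_pow_sub_one_dvd_mul_of_periodic (k := IsLocalRing.ResidueField V) hcop hlt ?_ hMq
    hq.two_le hF0 hG0 ((hf.of_C_mul hc).map_residue hq) ((hg.of_C_mul hc').map_residue hq) ?_
  · rwa [Ne, CharP.cast_eq_zero_iff _ q]
  · simpa using map_dvd (mapRingHom (IsLocalRing.residue V)) hdvd_V

lemma dvd_of_valuation_natCast_lt_one (V : ValuationSubring K) (q : ℕ)
    [CharP (IsLocalRing.ResidueField V) q] {m : ℕ} (hm : V.valuation (m : K) < 1) : q ∣ m := by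
  rw [← CharP.cast_eq_zero_iff (IsLocalRing.ResidueField V), ← map_natCast (IsLocalRing.residue V),
    IsLocalRing.residue_eq_zero_iff, V.valuation_lt_one_iff]
  exact_mod_cast hm

lemma valuation_sum_range_mul_lt_one (V : ValuationSubring K) {q M : ℕ} (hq : q.Prime)
    [CharP (IsLocalRing.ResidueField V) q] {a : ℕ → K} (hmem : ∀ i, a i ∈ V)
    (ha : ∀ i, ∃ v : K, v ^ q = 1 ∧ a (i + M) = v * a i) :
    V.valuation (∑ i ∈ range (M * q), a i) < 1 := by
  let b : ℕ → V := fun i => ⟨a i, hmem i⟩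
  have hb : Function.Periodic (fun i => IsLocalRing.residue V (b i)) M := fun i => by
    obtain ⟨v, hv, hav⟩ := ha i
    exact residue_eq_residue_of_coe_eq_mul hq hv hav
  have hsum : ∑ i ∈ range (M * q), a i = (∑ i ∈ range (M * q), b i : V) := by simp [b]
  rw [hsum, ← V.valuation_lt_one_iff, ← IsLocalRing.residue_eq_zero_iff, map_sum,
    sum_range_mul_of_periodic hb, nsmul_eq_mul, CharP.cast_eq_zero, zero_mul]

end ResidueCharacteristic

end TwistedPeriodicity

section Correlation

lemma eval_genPoly_xcorr {R : ℕ} (hR : R ≠ 0) (a b : ℕ → ℂ) {ξ : ℂ} (hξ : ξ ^ R = 1) :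
    (genPoly R (xcorr R a b)).eval (starRingEnd ℂ ξ) =
      (genPoly R a).eval ξ * starRingEnd ℂ ((genPoly R b).eval ξ) := by
  set ξ' := starRingEnd ℂ ξ with hξ'
  have hξ'R : ξ' ^ R = 1 := by rw [hξ', ← map_pow, hξ, map_one]
  have hcancel : ∀ i, ξ ^ i * ξ' ^ i = 1 := fun i => by
    rw [← mul_pow, Complex.mul_conj', Complex.norm_eq_one_of_pow_eq_one hξ hR]
    simp
  have hperiodic : Function.Periodic (fun l => starRingEnd ℂ (b (l % R)) * ξ' ^ l) R := fun l => by
    simp only [Nat.add_mod_right, pow_add, hξ'R, mul_one]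
  have hconj : starRingEnd ℂ ((genPoly R b).eval ξ) =
      ∑ l ∈ range R, starRingEnd ℂ (b (l % R)) * ξ' ^ l := by
    rw [eval_genPoly, map_sum]
    exact sum_congr rfl fun l hl => by
      rw [Nat.mod_eq_of_lt (mem_range.mp hl), map_mul, map_pow]
  simp only [eval_genPoly R a, eval_genPoly R (xcorr R a b), hconj, xcorr, sum_mul]
  rw [sum_comm]
  refine sum_congr rfl fun i _ => ?_
  rw [← sum_range_add_of_periodic hperiodic i, mul_sum]
  refine sum_congr rfl fun τ _ => ?_
  rw [pow_add]
  linear_combination (-(a i * starRingEnd ℂ (b ((i + τ) % R)) * ξ' ^ τ)) * hcancel i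

lemma xcorr_self_zero (R : ℕ) (s : ℕ → Circle) :
    xcorr R (fun i => s i) (fun i => s i) 0 = R := by
  have hterm : ∀ i ∈ range R, (s i : ℂ) * starRingEnd ℂ (s ((i + 0) % R)) = 1 := fun i hi => by
    rw [add_zero, Nat.mod_eq_of_lt (mem_range.mp hi), ← Circle.coe_inv_eq_conj, ← Circle.coe_mul,
      mul_inv_cancel, Circle.coe_one]
  rw [xcorr, sum_congr rfl hterm]
  simp

lemma sum_eval_genPoly_mul_conj_self {R : ℕ} {ζ : ℂ} (hζ : IsPrimitiveRoot ζ R) (s : ℕ → Circle) :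
    ∑ k ∈ range R, (genPoly R fun i => (s i : ℂ)).eval (ζ ^ k) *
      starRingEnd ℂ ((genPoly R fun i => (s i : ℂ)).eval (ζ ^ k)) = (R : ℂ) * R := by
  rcases eq_or_ne R 0 with rfl | hR
  · simp
  have hζ' : IsPrimitiveRoot (starRingEnd ℂ ζ) R := hζ.map_of_injective (starRingEnd ℂ).injective
  have hsum := sum_eval_genPoly_pow hζ' (xcorr R (fun i => s i) (fun i => s i))
  rw [xcorr_self_zero] at hsum
  rw [← hsum]
  refine sum_congr rfl fun k _ => ?_
  rw [← map_pow, eval_genPoly_xcorr hR _ _ (by rw [pow_right_comm, hζ.pow_eq_one, one_pow])]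

lemma xcorr_self_of_periodic {n R : ℕ} (hnR : n ≤ R) {s : ℕ → Circle}
    (hs : Function.Periodic s n) :
    xcorr R (fun i => s i) (fun i => s i) n =
      ((R - n : ℕ) : ℂ) + ∑ i ∈ range n, ((s (i + R) / s i : Circle) : ℂ) := by
  obtain ⟨m, rfl⟩ := Nat.exists_eq_add_of_le' hnR
  rw [xcorr, sum_range_add, Nat.add_sub_cancel]
  simp only [← Circle.coe_inv_eq_conj, ← Circle.coe_mul, ← div_eq_mul_inv]
  congr 1
  · have hterm : ∀ i ∈ range m, ((s i / s ((i + n) % (m + n)) : Circle) : ℂ) = 1 := fun i hi => by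
      rw [Nat.mod_eq_of_lt (by have := mem_range.mp hi; omega), hs, div_self', Circle.coe_one]
    rw [sum_congr rfl hterm]
    simp
  · refine sum_congr rfl fun i hi => ?_
    have hwrap : (m + i + n) % (m + n) = i := by
      rw [show m + i + n = i + (m + n) by ring, Nat.add_mod_right,
        Nat.mod_eq_of_lt (by have := mem_range.mp hi; omega)]
    rw [hwrap, ← hs (m + i), show m + i + n = i + (m + n) by ring]

end Correlation

namespace AOP

variable {R C : ℕ}

lemma eval_genPoly_mul_eq_zero {S : ℕ → ℕ → ℂ} (hA : AOP R C S) (hR : R ≠ 0) {j j' : ℕ}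
    (hj : j < C) (hj' : j' < C) (hne : j ≠ j') {ξ : ℂ} (hξ : ξ ^ R = 1) :
    (genPoly R fun i => S i j).eval ξ * (genPoly R fun i => S i j').eval ξ = 0 := by
  have h := eval_genPoly_xcorr hR (fun i => S i j) (fun i => S i j') hξ
  simp only [eval_genPoly, hA.1 _ j j' hj hj' hne, zero_mul, sum_const_zero] at h
  rw [eq_comm, mul_eq_zero, map_eq_zero] at h
  simpa only [eval_genPoly, mul_eq_zero] using h

variable {s : ℕ → ℕ → Circle} (hA : AOP R C fun i j => (s j i : ℂ))

include hA

lemma sum_eval_genPoly_mul_conj (hR : R ≠ 0) {ξ : ℂ} (hξ : ξ ^ R = 1) :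
    ∑ j ∈ range C, (genPoly R fun i => (s j i : ℂ)).eval ξ *
      starRingEnd ℂ ((genPoly R fun i => (s j i : ℂ)).eval ξ) = (C : ℂ) * R := by
  simp only [← eval_genPoly_xcorr hR _ _ hξ, eval_genPoly R (xcorr _ _ _)]
  rw [sum_comm]
  simp only [← sum_mul]
  rw [sum_eq_single_of_mem 0 (mem_range.mpr (Nat.pos_of_ne_zero hR))]
  · simp [xcorr_self_zero]
  · intro τ hτ hτ0
    rw [hA.2 τ (Nat.not_dvd_of_pos_of_lt (Nat.pos_of_ne_zero hτ0) (mem_range.mp hτ)), zero_mul]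

/-- At every `R`-th root of unity exactly one column has a nonzero Fourier coefficient, of squared
modulus `C * R`; Parseval for the column `0` then counts `R / C` such frequencies. -/
lemma dvd (hC : C ≠ 0) : C ∣ R := by
  rcases eq_or_ne R 0 with rfl | hR
  · exact dvd_zero C
  let F : ℕ → ℂ → ℂ := fun j ξ => (genPoly R fun i => (s j i : ℂ)).eval ξ
  have hζ := Complex.isPrimitiveRoot_exp R hR
  set ζ := Complex.exp (2 * Real.pi * Complex.I / R)
  have hpow : ∀ k, (ζ ^ k) ^ R = 1 := fun k => by rw [pow_right_comm, hζ.pow_eq_one, one_pow]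
  have hflat : ∀ k ∈ range R, F 0 (ζ ^ k) * starRingEnd ℂ (F 0 (ζ ^ k)) =
      if F 0 (ζ ^ k) ≠ 0 then (C : ℂ) * R else 0 := by
    intro k _
    split_ifs with hk
    · rw [← hA.sum_eval_genPoly_mul_conj hR (hpow k),
        sum_eq_single_of_mem 0 (mem_range.mpr (Nat.pos_of_ne_zero hC))]
      intro j hj hj0
      have h := hA.eval_genPoly_mul_eq_zero hR (Nat.pos_of_ne_zero hC) (mem_range.mp hj) hj0.symm
        (hpow k)
      rw [(mul_eq_zero.mp h).resolve_left hk, zero_mul]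
    · rw [not_not.mp hk, zero_mul]
  have hparseval := (sum_congr rfl hflat).symm.trans (sum_eval_genPoly_mul_conj_self hζ (s 0))
  rw [← sum_filter, sum_const, nsmul_eq_mul, ← mul_assoc] at hparseval
  refine Dvd.intro_left (#{k ∈ range R | F 0 (ζ ^ k) ≠ 0}) ?_
  exact_mod_cast mul_right_cancel₀ (Nat.cast_ne_zero.mpr hR) hparseval

section PeriodicColumns

variable {n : ℕ} (hs : ∀ j, Function.Periodic (s j) n) (hn : 0 < n) (hnR : n < R)

include hs hn hnR

lemma sum_shift_div :
    ∑ j ∈ range C, (((R - n : ℕ) : ℂ) +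
      ∑ i ∈ range n, ((s j (i + R) / s j i : Circle) : ℂ)) = 0 := by
  rw [← hA.2 n (Nat.not_dvd_of_pos_of_lt hn hnR)]
  exact sum_congr rfl fun j _ => (xcorr_self_of_periodic hnR.le (hs j)).symm

lemma exists_not_periodic (hC : C ≠ 0) : ∃ j < C, ¬ Function.Periodic (s j) R := by
  by_contra! hper
  have hterm : ∀ j ∈ range C,
      ((R - n : ℕ) : ℂ) + ∑ i ∈ range n, ((s j (i + R) / s j i : Circle) : ℂ) = R := fun j hj => by
    have hone : ∀ i, s j (i + R) / s j i = 1 := fun i => by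
      rw [hper j (mem_range.mp hj) i, div_self']
    simp only [hone, Circle.coe_one, sum_const, card_range, nsmul_one]
    rw [← Nat.cast_add, Nat.sub_add_cancel hnR.le]
  have hsum := hA.sum_shift_div hs hn hnR
  rw [sum_congr rfl hterm, sum_const, card_range, nsmul_eq_mul, ← Nat.cast_mul, Nat.cast_eq_zero,
    mul_eq_zero] at hsum
  omega

/-- In the autocorrelation at shift `n` an `R`-periodic column contributes `R`, and any other one
at least `R - 2 * n`. -/
lemma mul_le_two_mul {j₀ : ℕ} (hj₀ : j₀ < C)
    (hper : ∀ j < C, j ≠ j₀ → Function.Periodic (s j) R) : C * R ≤ 2 * n := by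
  have hlower : ∀ z : Circle, -1 ≤ (z : ℂ).re := fun z =>
    (abs_le.mp ((Complex.abs_re_le_norm z).trans z.norm_coe.le)).1
  have hterm : ∀ j ∈ range C, (R : ℝ) - (if j = j₀ then 2 * n else 0 : ℝ) ≤
      ((R - n : ℕ) : ℝ) + ∑ i ∈ range n, ((s j (i + R) / s j i : Circle) : ℂ).re := by
    intro j hj
    rw [Nat.cast_sub hnR.le]
    split_ifs with hjj₀
    · have := card_nsmul_le_sum (range n) _ (-1) fun i _ => hlower (s j (i + R) / s j i)
      rw [card_range, nsmul_eq_mul] at this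
      linarith
    · have hone : ∀ i, s j (i + R) / s j i = 1 := fun i => by
        rw [hper j (mem_range.mp hj) hjj₀ i, div_self']
      simp [hone]
  have hsum := congrArg Complex.re (hA.sum_shift_div hs hn hnR)
  simp only [Complex.re_sum, Complex.add_re, Complex.natCast_re, Complex.zero_re] at hsum
  have hle := sum_le_sum hterm
  rw [hsum, sum_sub_distrib, sum_ite_eq' (range C) j₀, if_pos (mem_range.mpr hj₀), sum_const,
    card_range, nsmul_eq_mul] at hle
  exact_mod_cast sub_nonpos.mp hle

end PeriodicColumns

end AOP

lemma X_pow_sub_one_dvd_of_eval_eq_zero {k : Type*} [Field k] [IsAlgClosed k] {R : ℕ}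
    (hR : (R : k) ≠ 0) {f : k[X]} (hf : ∀ ξ : k, ξ ^ R = 1 → f.eval ξ = 0) : X ^ R - 1 ∣ f := by
  rcases eq_or_ne f 0 with rfl | hf0
  · exact dvd_zero _
  have hsep : (X ^ R - 1 : k[X]).Separable := X_pow_sub_one_separable_iff.mpr hR
  rw [IsAlgClosed.dvd_iff_roots_le_roots hsep.ne_zero hf0,
    Multiset.le_iff_subset (nodup_roots hsep)]
  intro ξ hξ
  rw [mem_roots hf0]
  exact hf ξ (by simpa [sub_eq_zero] using isRoot_of_mem_roots hξ)

lemma AOP.X_pow_sub_one_dvd_genPoly_mul {R C n : ℕ} {S : ℕ → ℕ → ℂ} (hA : AOP R C S) (hR : R ≠ 0)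
    (hS : ∀ j, Function.Periodic (fun i => S i j) n) {j j' : ℕ} (hj : j < C) (hj' : j' < C)
    (hne : j ≠ j') :
    (X ^ R - 1 : ℂ[X]) ∣
      (genPoly n fun i => S i j - S (i + R) j) * genPoly n fun i => S i j' - S (i + R) j' :=
  X_pow_sub_one_dvd_of_eval_eq_zero (Nat.cast_ne_zero.mpr hR) fun ξ hξ => by
    rw [eval_mul, eval_genPoly_sub_shift (hS j) hξ, eval_genPoly_sub_shift (hS j') hξ,
      mul_mul_mul_comm, hA.eval_genPoly_mul_eq_zero hR hj hj' hne hξ, mul_zero]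

section PolynomialPhases

lemma exists_eval_add_sub_eval_eq_mul {A : Type*} [CommRing A] (Q : A[X]) (t : A) :
    ∃ r : A[X], ∀ x, Q.eval (x + t) - Q.eval x = t * r.eval x := by
  obtain ⟨r, hr⟩ : C t ∣ Q.comp (X + C t) - Q := by
    have h := sub_dvd_eval_sub (X + C t) X (Q.map C)
    rwa [add_sub_cancel_left, eval_map, eval_map, eval₂_C_X] at h
  exact ⟨r, fun x => by simpa using congrArg (eval x) hr⟩

/-- The sequence `ω ^ Q(i)`, a column of the array `ω ^ p(i, j)`, in an arbitrary group. -/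
def phase {G : Type*} [Group G] (ω : G) (Q : ℤ[X]) (i : ℕ) : G :=
  ω ^ Q.eval (i : ℤ)

variable {G : Type*} [Group G]

lemma exists_phase_add_div_eq_phase (ω : G) (Q : ℤ[X]) (t : ℕ) :
    ∃ r : ℤ[X], ∀ i, phase ω Q (i + t) / phase ω Q i = phase (ω ^ t) r i := by
  obtain ⟨r, hr⟩ := exists_eval_add_sub_eval_eq_mul Q (t : ℤ)
  refine ⟨r, fun i => ?_⟩
  rw [phase, phase, phase, Nat.cast_add, div_eq_mul_inv, ← zpow_sub, hr, zpow_mul, zpow_natCast]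

lemma phase_pow_eq_one {ω : G} {q : ℕ} (hω : ω ^ q = 1) (Q : ℤ[X]) (i : ℕ) :
    phase ω Q i ^ q = 1 := by
  rw [phase, ← zpow_natCast, zpow_comm, zpow_natCast, hω, one_zpow]

lemma phase_add_div_pow_eq_one {ω : G} {t q : ℕ} (hω : ω ^ (t * q) = 1) (Q : ℤ[X]) (i : ℕ) :
    (phase ω Q (i + t) / phase ω Q i) ^ q = 1 := by
  obtain ⟨r, hr⟩ := exists_phase_add_div_eq_phase ω Q t
  rw [hr, phase_pow_eq_one (by rw [← pow_mul, hω])]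

lemma phase_periodic {ω : G} {t : ℕ} (hω : ω ^ t = 1) (Q : ℤ[X]) :
    Function.Periodic (phase ω Q) t := fun i => by
  simpa [div_eq_one] using phase_add_div_pow_eq_one (q := 1) (by rwa [mul_one]) Q i

lemma exists_phase_sub_shift_add_eq_mul {ω : Circle} {M q R : ℕ} (hMq : ω ^ (M * q) = 1)
    (hMR : ω ^ (M * R) = 1) (Q : ℤ[X]) (i : ℕ) :
    ∃ v : ℂ, v ^ q = 1 ∧ (phase ω Q (i + M) - phase ω Q (i + M + R) : ℂ) =
      v * (phase ω Q i - phase ω Q (i + R)) := by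
  obtain ⟨r, hr⟩ := exists_phase_add_div_eq_phase ω Q R
  have hshift : ∀ i, phase ω Q (i + R) = phase (ω ^ R) r i * phase ω Q i := fun i => by
    rw [← hr, div_mul_cancel]
  have hr_periodic : phase (ω ^ R) r (i + M) = phase (ω ^ R) r i :=
    phase_periodic (by rw [← pow_mul, mul_comm, hMR]) r i
  refine ⟨(phase ω Q (i + M) / phase ω Q i : Circle), ?_, ?_⟩
  · rw [← Circle.coe_pow, phase_add_div_pow_eq_one hMq, Circle.coe_one]
  · rw [hshift, hshift, hr_periodic]
    push_cast
    field_simp [Circle.coe_ne_zero]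

end PolynomialPhases

section PhaseArrays

variable {ω : Circle} {Q : ℕ → ℤ[X]} {C d K q R' : ℕ}
  (hA : AOP (d * R') C fun i j => ((phase ω (Q j) i : Circle) : ℂ)) (hω : ω ^ (d * (K * q)) = 1)
  (hq : q.Prime) (hd : 0 < d) (hK : 0 < K) (hlt : K * q < R') (hcop : R'.Coprime (K * q))

include hA hω hq hd hK hlt hcop

/-- For `i` below `d * (K * q)` the quotients `s (i + R) / s i` run `d` times through a period of
length `K * q`, whose sum vanishes modulo a prime above `q`. -/
lemma AOP.prime_dvd : q ∣ C := by
  obtain ⟨V, _⟩ := exists_valuationSubring_charP_residueField ℂ hq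
  choose r hr using fun j => exists_phase_add_div_eq_phase ω (Q j) (d * R')
  set η := ω ^ (d * R')
  have hη : η ^ (K * q) = 1 := by
    rw [← pow_mul, mul_right_comm, pow_mul, hω, one_pow]
  let σ : ℕ → ℂ := fun j => ∑ i ∈ range (K * q), ((phase η (r j) i : Circle) : ℂ)
  have hblocks : ∀ j, ∑ i ∈ range (d * (K * q)), ((phase η (r j) i : Circle) : ℂ) = d * σ j := by
    intro j
    rw [mul_comm d, ← nsmul_eq_mul]
    exact sum_range_mul_of_periodic ((phase_periodic hη (r j)).comp _) d
  have hsum := hA.sum_shift_div (fun j => phase_periodic hω (Q j))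
    (Nat.mul_pos hd (Nat.mul_pos hK hq.pos)) (Nat.mul_lt_mul_of_pos_left hlt hd)
  simp only [hr, ← Nat.mul_sub, Nat.cast_mul d, hblocks, ← mul_add, ← mul_sum] at hsum
  have hcount : ((C * (R' - K * q) : ℕ) : ℂ) = -∑ j ∈ range C, σ j := by
    have h := (mul_eq_zero.mp hsum).resolve_left (Nat.cast_ne_zero.mpr hd.ne')
    rw [sum_add_distrib, sum_const, card_range, nsmul_eq_mul] at h
    rw [Nat.cast_mul]
    exact eq_neg_of_add_eq_zero_left h
  have hσ : ∀ j, V.valuation (σ j) < 1 := fun j => by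
    refine valuation_sum_range_mul_lt_one V hq (fun i => ?_) fun i => ?_
    · exact mem_valuationSubring_of_pow_eq_one V (Nat.mul_pos hK hq.pos).ne'
        (by rw [← Circle.coe_pow, phase_pow_eq_one hη, Circle.coe_one])
    · refine ⟨(phase η (r j) (i + K) / phase η (r j) i : Circle), ?_, ?_⟩
      · rw [← Circle.coe_pow, phase_add_div_pow_eq_one hη, Circle.coe_one]
      · rw [← Circle.coe_mul, div_mul_cancel]
  have hdvd : q ∣ C * (R' - K * q) := by
    apply dvd_of_valuation_natCast_lt_one V
    rw [hcount, Valuation.map_neg]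
    exact Valuation.map_sum_lt _ one_ne_zero fun j _ => hσ j
  refine (hq.dvd_mul.mp hdvd).resolve_right fun h => ?_
  exact hq.one_lt.ne' (Nat.eq_one_of_dvd_coprimes hcop
    ((Nat.dvd_sub_iff_left hlt.le (Dvd.intro_left K rfl)).mp h) (Dvd.intro_left K rfl))

lemma AOP.periodic_or_periodic (hqR : q ∣ d * R') {j j' : ℕ} (hj : j < C) (hj' : j' < C)
    (hne : j ≠ j') :
    Function.Periodic (phase ω (Q j)) (d * R') ∨ Function.Periodic (phase ω (Q j')) (d * R') := by
  by_contra! hnot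
  have hn : 0 < d * (K * q) := Nat.mul_pos hd (Nat.mul_pos hK hq.pos)
  have hR : d * R' ≠ 0 := (Nat.mul_pos hd (Nat.zero_lt_of_lt hlt)).ne'
  have hMR : ω ^ (d * K * (d * R')) = 1 := by
    obtain ⟨z, hz⟩ := hqR
    rw [hz, ← mul_assoc, mul_assoc d, pow_mul, hω, one_pow]
  have hqR' : ¬ q ∣ R' := fun h =>
    hq.one_lt.ne' (Nat.eq_one_of_dvd_coprimes hcop h (Dvd.intro_left K rfl))
  have htwisted := fun j =>
    isTwistedPeriodic_genPoly hn.ne' (M := d * K) (q := q)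
      (a := fun i => (phase ω (Q j) i - phase ω (Q j) (i + d * R') : ℂ))
      (exists_phase_sub_shift_add_eq_mul (by rwa [mul_assoc]) hMR (Q j))
  have hperiodic : ∀ j, Function.Periodic (fun i => ((phase ω (Q j) i : Circle) : ℂ)) _ := fun j =>
    (phase_periodic hω (Q j)).comp _
  have hne_zero : ∀ j, ¬ Function.Periodic (phase ω (Q j)) (d * R') →
      genPoly _ (fun i => (phase ω (Q j) i - phase ω (Q j) (i + d * R') : ℂ)) ≠ 0 := fun j hj =>
    genPoly_sub_shift_ne_zero hn (hperiodic j) fun h => hj fun i => Circle.coe_injective (h i)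
  exact IsTwistedPeriodic.not_X_pow_sub_one_dvd_mul hq hcop hlt hqR' (mul_assoc d K q)
    (hne_zero j hnot.1) (hne_zero j' hnot.2) (htwisted j) (htwisted j') <|
    hA.X_pow_sub_one_dvd_genPoly_mul hR hperiodic hj hj' hne

end PhaseArrays

theorem aop_polynomial_row_bound_general {R C n : ℕ} (hC : 0 < C) (hn : 0 < n) {ω : ℂ}
    (hω : ω ^ n = 1) (Q : ℕ → ℤ[X]) (hAOP : AOP R C fun i j => ω ^ (Q j).eval (i : ℤ)) :
    R ≤ n := by
  by_contra! hnR
  obtain ⟨ω, rfl⟩ : ∃ z : Circle, (z : ℂ) = ω :=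
    ⟨⟨ω, mem_sphere_zero_iff_norm.mpr (Complex.norm_eq_one_of_pow_eq_one hω hn.ne')⟩, rfl⟩
  replace hω : ω ^ n = 1 := Circle.coe_injective hω
  replace hAOP : AOP R C fun i j => ((phase ω (Q j) i : Circle) : ℂ) := by
    simpa only [phase, Circle.coe_zpow] using hAOP
  obtain ⟨j₀, hj₀, hnot⟩ :=
    hAOP.exists_not_periodic (fun j => phase_periodic hω (Q j)) hn hnR hC.ne'
  obtain ⟨d, N, R', hd, hcop, hnd, hRd⟩ := Nat.exists_coprime' (Nat.gcd_pos_of_pos_left R hn)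
  rw [mul_comm] at hnd hRd
  subst hnd hRd
  have hN : N ≠ 1 := by
    rintro rfl
    exact hnot (phase_periodic (by rw [pow_mul, ← mul_one d, hω, one_pow]) _)
  obtain ⟨q, hq, hqN⟩ := Nat.exists_prime_and_dvd hN
  obtain ⟨K, rfl⟩ := exists_eq_mul_left_of_dvd hqN
  have hK : 0 < K := Nat.pos_of_mul_pos_right (Nat.pos_of_mul_pos_left hn)
  have hlt : K * q < R' := Nat.lt_of_mul_lt_mul_left hnR
  have hqC : q ∣ C := hAOP.prime_dvd hω hq hd hK hlt hcop.symm
  have hper : ∀ j < C, j ≠ j₀ → Function.Periodic (phase ω (Q j)) (d * R') := fun j hj hne =>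
    (hAOP.periodic_or_periodic hω hq hd hK hlt hcop.symm (hqC.trans (hAOP.dvd hC.ne')) hj hj₀
      hne).resolve_right hnot
  have hle := hAOP.mul_le_two_mul (fun j => phase_periodic hω (Q j)) hn hnR hj₀ hper
  have hCq := Nat.mul_le_mul_right (d * R') (hq.two_le.trans (Nat.le_of_dvd hC hqC))
  omega

/-- The restriction `p(x, y)` of a bivariate polynomial to the column `y`. -/
noncomputable def columnPolynomial {A : Type*} [CommSemiring A] (p : MvPolynomial (Fin 2) A)
    (y : A) : A[X] :=
  MvPolynomial.aeval ![X, C y] p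

lemma eval_columnPolynomial {A : Type*} [CommSemiring A] (p : MvPolynomial (Fin 2) A) (x y : A) :
    (columnPolynomial p y).eval x = MvPolynomial.eval ![x, y] p := by
  rw [columnPolynomial, MvPolynomial.aeval_def, ← coe_evalRingHom, MvPolynomial.hom_eval₂,
    MvPolynomial.eval, MvPolynomial.coe_eval₂Hom]
  congr 1
  · ext; simp
  · funext i; fin_cases i <;> simp

/-- If the `R × C` array `S_{i,j} = ω^{p(i,j)}` (with `ω = e^{2πi/n}`, `p ∈ ℤ[x,y]`)
has the Array Orthogonality Property for divisor `C`, then `R ≤ n`. -/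
theorem aop_polynomial_row_bound (R C n : ℕ) (hR : 0 < R) (hC : 0 < C) (hn : 0 < n)
    (p : MvPolynomial (Fin 2) ℤ)
    (ω : ℂ) (hω : ω = Complex.exp (2 * Real.pi * Complex.I / n))
    (S : ℕ → ℕ → ℂ)
    (hS : ∀ i j : ℕ, S i j = ω ^ (MvPolynomial.eval ![(i : ℤ), (j : ℤ)] p))
    (hAOP : AOP R C S) : R ≤ n := by
  have hωn : ω ^ n = 1 := hω ▸ (Complex.isPrimitiveRoot_exp n hn.ne').pow_eq_one
  refine aop_polynomial_row_bound_general hC hn hωn (fun j => columnPolynomial p j) ?_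
  simpa only [eval_columnPolynomial, ← hS] using hAOP
end

section
/- Let s be a sequence of length L = R·C over K-th roots of unity with array entries S_{i,j} = ω^{⌊p(i,j)/n⌋}, where ω = e^{2πi/K}, p ∈ ℤ[x,y], and n ∈ ℤ⁺. If s possesses the Array Orthogonality Property for divisor C, then C ≤ nK and R ≤ nK, hence L ≤ n²K². -/
/-!
For the columns, translating the column index by `nK` changes `⌊p(i, j) / n⌋` by a multiple of `K`,
so if `nK < C` then columns `0` and `nK` coincide and cannot be uncorrelated.

For the rows, suppose `nK < R` and view each column as a sequence on `ℤ`, of period `nK`. If every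
column also had period `R`, all autocorrelations at the nonzero shift `nK` would be equal to `R`;
so it suffices to show that the cyclic wrap-around at `R` breaks no column. When `K = m k`,
translation by `D = nm` multiplies a column by a `k`-periodic sequence `z` of `k`-th roots of unity.
Let `v` extend the `q`-adic valuation for a prime `q ∣ K`. The increments `s t - s (t - D)`,
corrected by `z - 1` when `K` is a power of `q`, are `v`-small except where the wrap-around breaks
the column, which can only happen for `t < D`. Thus the large increments of two columns lie in a
window of length `D`, and the leftmost maximum of one facing the rightmost maximum of the other
yields a correlation strictly larger than those at all shifts in the gap `[D, R - D]`. But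
correlations of increments are second differences of correlations, which the orthogonality property
annihilates, and the correction only adds a periodic function of the shift: no shift can dominate
the gap, so no column breaks.

If `K` has two prime divisors, the uncorrected argument with `k = q ^ e`, the exact power of `q` in
`K`, shows that `s (i + R) / s i` has `q`-power order for two different `q`, hence equals `1`. If
`K` is a power of `q`, take `k = q`. The gap is then long enough except when `q = 2` and
`R = 2D + 2`, which is settled by computing the autocorrelations at the shifts `2` and `D`.
-/

section Valuation

variable {L : Type*} [Field L]

theorem exists_valuationSubring_valuation_natCast_lt_one [CharZero L] {q : ℕ} (hq : q.Prime) :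
    ∃ V : ValuationSubring L, V.valuation (q : L) < 1 := by
  let A : Subring L := (Int.castRingHom L).range
  let qA : A := ⟨q, q, by simp⟩
  have span_ne_top : Ideal.span {qA} ≠ ⊤ := by
    rw [Ne, Ideal.span_singleton_eq_top]
    rintro ⟨u, hu⟩
    obtain ⟨m, hm⟩ := (↑u⁻¹ : A).2
    have hqm : (q : L) * m = 1 := by
      have h : (qA : L) * (↑u⁻¹ : A) = 1 := by
        rw [← hu]
        exact_mod_cast congrArg Subtype.val u.mul_inv
      rwa [← hm] at h
    exact (Nat.prime_iff_prime_int.mp hq).not_isUnit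
      (IsUnit.of_mul_eq_one m (by exact_mod_cast hqm))
  obtain ⟨V, -, hmem⟩ :=
    Ideal.image_subset_nonunits_valuationSubring (Ideal.span {qA}) span_ne_top
  exact ⟨V, hmem ⟨qA, Ideal.subset_span rfl, rfl⟩⟩

variable {Γ₀ : Type*} [LinearOrderedCommGroupWithZero Γ₀] (v : Valuation L Γ₀)

theorem valuation_eq_one_of_pow_eq_one {x : L} {m : ℕ} (hm : m ≠ 0) (hx : x ^ m = 1) :
    v x = 1 :=
  (pow_eq_one_iff.mp (by rw [← map_pow, hx, map_one])).resolve_right hm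

theorem valuation_pow_sub_one_le {x : L} (hx : v x ≤ 1) (a : ℕ) :
    v (x ^ a - 1) ≤ v (x - 1) := by
  rw [← mul_geom_sum, map_mul]
  exact mul_le_of_le_one_right' (v.map_sum_le fun i _ => by
    rw [map_pow]; exact pow_le_one₀ zero_le hx)

variable {v} {q : ℕ}

theorem dvd_of_valuation_intCast_lt_one (hq : q.Prime) (hv : v (q : L) < 1) {m : ℤ}
    (hm : v (m : L) < 1) : (q : ℤ) ∣ m := by
  by_contra hqm
  obtain ⟨a, b, hab⟩ := (Nat.prime_iff_prime_int.mp hq).coprime_iff_not_dvd.mpr hqm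
  have hlt (c d : ℤ) (hd : v (d : L) < 1) : v ((c * d : ℤ) : L) < 1 := by
    rw [Int.cast_mul, map_mul]
    exact mul_lt_one_of_nonneg_of_lt_one_right (intCast_mem v.integer c) zero_le hd
  have := v.map_add_lt (hlt a q (by simpa only [Int.cast_natCast] using hv)) (hlt b m hm)
  rw [← Int.cast_add, hab, Int.cast_one, map_one] at this
  exact lt_irrefl _ this

/-- Reducing `∑ f = k` modulo the maximal ideal, where every summand becomes `1`. -/
theorem prime_dvd_card_sub_of_sum_eq (hq : q.Prime) (hv : v (q : L) < 1) {ι : Type*}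
    {s : Finset ι} {f : ι → L} (hf : ∀ i ∈ s, v (f i - 1) < 1) {k : ℤ}
    (hk : ∑ i ∈ s, f i = k) : (q : ℤ) ∣ s.card - k := by
  refine dvd_of_valuation_intCast_lt_one hq hv ?_
  have : (((s.card : ℤ) - k : ℤ) : L) = -∑ i ∈ s, (f i - 1) := by
    simp only [Finset.sum_sub_distrib, hk, Finset.sum_const, nsmul_eq_mul, mul_one]
    push_cast
    ring
  rw [this, Valuation.map_neg]
  exact v.map_sum_lt one_ne_zero hf

theorem valuation_sub_one_lt_one_of_pow_prime_pow_eq_one (hq : q.Prime) (hv : v (q : L) < 1)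
    {x : L} {e : ℕ} (hx : x ^ q ^ e = 1) : v (x - 1) < 1 := by
  have hx1 : v (x - 1) ≤ 1 :=
    v.map_sub_le (valuation_eq_one_of_pow_eq_one v (pow_ne_zero e hq.ne_zero) hx).le v.map_one.le
  obtain ⟨r, hr⟩ := exists_add_pow_prime_pow_eq hq (⟨x - 1, hx1⟩ : v.integer) 1 e
  have hr' : (x - 1) ^ q ^ e = -(q * (x - 1) * r) := by
    have := congrArg Subtype.val hr
    simp only [Subring.coe_add, Subring.coe_mul, Subring.coe_pow, Subring.coe_one, mul_one,
      sub_add_cancel, one_pow, hx, Subring.coe_natCast] at this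
    linear_combination -this
  refine (pow_lt_one_iff_of_nonneg zero_le (pow_ne_zero e hq.ne_zero)).mp ?_
  rw [← map_pow, hr', Valuation.map_neg, map_mul, map_mul]
  exact mul_lt_one_of_lt_of_le (mul_lt_one_of_lt_of_le hv hx1) r.2

theorem eq_one_of_pow_eq_one_of_valuation_sub_one_lt_one (hq : q.Prime) (hv : v (q : L) < 1)
    {x : L} {m : ℕ} (hqm : ¬q ∣ m) (hxm : x ^ m = 1) (hx : v (x - 1) < 1) : x = 1 := by
  by_contra hne
  have hm : m ≠ 0 := fun h => hqm (h ▸ dvd_zero q)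
  have hsum : ∑ i ∈ Finset.range m, x ^ i = ((0 : ℤ) : L) := by
    rw [Int.cast_zero]
    exact (mul_eq_zero.mp (by rw [mul_geom_sum, hxm, sub_self])).resolve_left
      (sub_ne_zero.mpr hne)
  have := prime_dvd_card_sub_of_sum_eq hq hv (fun i _ => (valuation_pow_sub_one_le v
    (valuation_eq_one_of_pow_eq_one v hm hxm).le i).trans_lt hx) hsum
  rw [Finset.card_range, sub_zero] at this
  exact hqm (by exact_mod_cast this)

theorem eq_one_of_valuation_sub_one_lt (hq : q.Prime) {ζ : L} (hζ : IsPrimitiveRoot ζ q) {x : L}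
    {e : ℕ} (hx : x ^ q ^ e = 1) (hlt : v (x - 1) < v (ζ - 1)) : x = 1 := by
  obtain ⟨d, -, hd⟩ := (Nat.dvd_prime_pow hq).mp (orderOf_dvd_of_pow_eq_one hx)
  rcases d with _ | d
  · exact orderOf_eq_one_iff.mp (by simpa using hd)
  have hprim : IsPrimitiveRoot (x ^ q ^ d) q :=
    (IsPrimitiveRoot.orderOf x).pow (hd ▸ pow_pos hq.pos _) (by rw [hd, pow_succ])
  have : NeZero q := ⟨hq.ne_zero⟩
  obtain ⟨i, -, hi⟩ := hprim.eq_pow_of_pow_eq_one hζ.pow_eq_one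
  have hvx : v x ≤ 1 := (valuation_eq_one_of_pow_eq_one v (pow_ne_zero e hq.ne_zero) hx).le
  rw [← hi, ← pow_mul] at hlt
  exact absurd (valuation_pow_sub_one_le v hvx _) hlt.not_ge

theorem valuation_sub_lt_one_iff_pow_eq (hq : q.Prime) (hv : v (q : L) < 1) {e m : ℕ}
    (hqm : ¬q ∣ m) {a b : L} (ha : a ^ (q ^ e * m) = 1) (hb : b ^ (q ^ e * m) = 1) :
    v (a - b) < 1 ↔ a ^ q ^ e = b ^ q ^ e := by
  have hK : q ^ e * m ≠ 0 := mul_ne_zero (pow_ne_zero e hq.ne_zero) fun h => hqm (h ▸ dvd_zero q)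
  have hb0 : b ≠ 0 := fun h => by simp [h, hK] at hb
  have hvb := valuation_eq_one_of_pow_eq_one v hK hb
  have hab : v (a - b) = v (a / b - 1) := by
    rw [div_sub_one hb0, map_div₀, hvb, div_one]
  have hpow : (a / b) ^ (q ^ e * m) = 1 := by rw [div_pow, ha, hb, div_one]
  rw [hab, ← div_eq_one_iff_eq (pow_ne_zero _ hb0), ← div_pow]
  constructor
  · intro h
    refine eq_one_of_pow_eq_one_of_valuation_sub_one_lt_one hq hv hqm (by rw [← pow_mul, hpow]) ?_
    exact (valuation_pow_sub_one_le v (valuation_eq_one_of_pow_eq_one v hK hpow).le _).trans_lt h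
  · exact valuation_sub_one_lt_one_of_pow_prime_pow_eq_one hq hv

theorem valuation_sub_sub_lt_iff_eq_mul (hq : q.Prime) (hv : v (q : L) < 1) {ζ : L}
    (hζ : IsPrimitiveRoot ζ q) {e : ℕ} {a b z : L} (ha : a ^ q ^ e = 1) (hb : b ^ q ^ e = 1)
    (hz : z ^ q = 1) : v (a - b - (z - 1)) < v (ζ - 1) ↔ a = b * z := by
  have : NeZero q := ⟨hq.ne_zero⟩
  have val_one (x : L) (k : ℕ) (hx : x ^ q ^ k = 1) : v x = 1 :=
    valuation_eq_one_of_pow_eq_one v (pow_ne_zero k hq.ne_zero) hx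
  have hvb := val_one b e hb
  have hz0 : v z = 1 := val_one z 1 (by rwa [pow_one])
  have hbz : b * z ≠ 0 := by rw [← v.ne_zero_iff, map_mul, hvb, hz0]; simp
  have hvz : v (z - 1) ≤ v (ζ - 1) := by
    obtain ⟨i, -, rfl⟩ := hζ.eq_pow_of_pow_eq_one hz
    exact valuation_pow_sub_one_le v (val_one ζ 1 (by rw [pow_one, hζ.pow_eq_one])).le i
  have hζ0 : 0 < v (ζ - 1) :=
    (v.pos_iff).mpr (sub_ne_zero.mpr (hζ.ne_one hq.one_lt))
  have hsecond : v ((b - 1) * (z - 1)) < v (ζ - 1) := by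
    rw [map_mul]
    exact (mul_le_mul_right hvz _).trans_lt (mul_lt_of_lt_one_left hζ0
      (valuation_sub_one_lt_one_of_pow_prime_pow_eq_one hq hv hb))
  have hfirst : v (a - b * z) = v (a / (b * z) - 1) := by
    rw [div_sub_one hbz, map_div₀, map_mul, hvb, hz0, mul_one, div_one]
  rw [show a - b - (z - 1) = a - b * z + (b - 1) * (z - 1) by ring]
  constructor
  · intro h
    have hlt := v.map_sub_lt h hsecond
    rw [add_sub_cancel_right, hfirst] at hlt
    refine (div_eq_one_iff_eq hbz).mp (eq_one_of_valuation_sub_one_lt hq hζ (e := e + 1) ?_ hlt)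
    rw [div_pow, mul_pow, pow_succ, pow_mul a, ha, pow_mul b, hb, mul_comm (q ^ e), pow_mul z, hz]
    simp only [one_pow, mul_one, div_one]
  · rintro rfl
    rwa [sub_self, zero_add]

end Valuation

section Correlation

variable {G A : Type*} [AddCommGroup G] [Fintype G] [CommRing A]

/-- Correlation of two functions on a finite abelian group. No conjugation is built in: the second
factor of a periodic correlation of unimodular sequences is passed as a pointwise inverse. -/
def corr (a b : G → A) (τ : G) : A := ∑ t, a t * b (t + τ)

/-- The increment `t ↦ a t - a (t - s)` of a function along a translation. -/
def cyclicDiff (s : G) (a : G → A) (t : G) : A := a t - a (t - s)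

theorem corr_sub_left (a a' b : G → A) (τ : G) :
    corr (a - a') b τ = corr a b τ - corr a' b τ := by
  simp only [corr, Pi.sub_apply, sub_mul, Finset.sum_sub_distrib]

theorem corr_sub_right (a b b' : G → A) (τ : G) :
    corr a (b - b') τ = corr a b τ - corr a b' τ := by
  simp only [corr, Pi.sub_apply, mul_sub, Finset.sum_sub_distrib]

theorem corr_translate_left (a b : G → A) (s τ : G) :
    corr (fun t => a (t - s)) b τ = corr a b (τ + s) :=
  Fintype.sum_equiv (Equiv.subRight s) _ _ fun t => by
    rw [Equiv.subRight_apply, ← add_assoc, add_right_comm, sub_add_cancel]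

theorem corr_translate_right (a b : G → A) (s τ : G) :
    corr a (fun t => b (t - s)) τ = corr a b (τ - s) := by
  simp only [corr, add_sub_assoc]

theorem corr_cyclicDiff (a b : G → A) (s τ : G) :
    corr (cyclicDiff s a) (cyclicDiff s b) τ =
      2 * corr a b τ - corr a b (τ - s) - corr a b (τ + s) := by
  change corr (a - fun t => a (t - s)) (b - fun t => b (t - s)) τ = _
  simp only [corr_sub_left, corr_sub_right, corr_translate_left, corr_translate_right,
    sub_add_cancel]
  ring

theorem periodic_corr_left {a : G → A} {P : G} (ha : Function.Periodic a P) (b : G → A) :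
    Function.Periodic (corr a b) P := fun τ => by
  rw [← corr_translate_left]
  simp only [ha.sub_eq]

theorem periodic_corr_right (a : G → A) {b : G → A} {P : G} (hb : Function.Periodic b P) :
    Function.Periodic (corr a b) P := fun τ => by
  simp only [corr, ← add_assoc, hb _]

theorem periodic_corr_sub_sub_corr (a b : G → A) {e e' : G → A} {P : G}
    (he : Function.Periodic e P) (he' : Function.Periodic e' P) :
    Function.Periodic (corr (a - e) (b - e') - corr a b) P := by
  have expand : corr (a - e) (b - e') - corr a b = -(corr a e' + corr e (b - e')) := by
    ext τ
    simp only [Pi.sub_apply, Pi.neg_apply, Pi.add_apply, corr_sub_left, corr_sub_right]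
    ring
  rw [expand]
  intro τ
  simp only [Pi.neg_apply, Pi.add_apply, periodic_corr_right a he' τ, periodic_corr_left he _ τ]

end Correlation

section Window

variable {R : ℕ} [NeZero R]

theorem exists_val_mem_window_eq_of_periodic {α : Type*} {g : ZMod R → α} {P : ℕ}
    (hP : 0 < P) (hg : Function.Periodic g P) {w : ℕ} (hw : w + P ≤ R) (τ : ZMod R) :
    ∃ τ' : ZMod R, w ≤ τ'.val ∧ τ'.val < w + P ∧ g τ' = g τ := by
  have hg' : Function.Periodic (fun i : ℤ => g i) P := fun i => by
    simpa only [Int.cast_add, Int.cast_natCast] using hg i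
  obtain ⟨y, ⟨hwy, hyP⟩, hy⟩ :=
    hg'.exists_mem_Ico (by exact_mod_cast hP) τ.val w
  have hval : ((y : ZMod R).val : ℤ) = y := by
    rw [ZMod.val_intCast, Int.emod_eq_of_lt (by omega) (by omega)]
  refine ⟨y, by omega, by omega, ?_⟩
  rw [← hy]
  simp only [Int.cast_natCast, ZMod.natCast_zmod_val]

end Window

section Peak

theorem exists_max_fst_max_snd {α β γ : Type*} [Finite α] [Nonempty α] [LinearOrder β]
    [LinearOrder γ] (f : α → β) (h : α → γ) :
    ∃ a, ∀ x, f x < f a ∨ f x = f a ∧ h x ≤ h a := by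
  obtain ⟨a, ha⟩ := Finite.exists_max fun x => toLex (f x, h x)
  exact ⟨a, fun x => Prod.Lex.le_iff.mp (ha x)⟩

theorem mul_lt_mul_of_le_of_le_of_lt_or_lt {Γ₀ : Type*} [LinearOrderedCommGroupWithZero Γ₀]
    {a a' b b' : Γ₀} (ha' : 0 < a') (hb' : 0 < b') (ha : a ≤ a') (hb : b ≤ b')
    (h : a < a' ∨ b < b') : a * b < a' * b' :=
  h.elim (fun h => mul_lt_mul_of_lt_of_le_of_nonneg_of_pos h hb zero_le hb')
    fun h => mul_lt_mul_of_le_of_lt_of_nonneg_of_pos ha h zero_le ha'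

variable {R : ℕ} {L Γ₀ : Type*} [Field L] [LinearOrderedCommGroupWithZero Γ₀]
  {v : Valuation L Γ₀} {V₀ : Γ₀} {D : ℕ}

theorem val_add_sub_add_val {s t u : ZMod R} (hlt : s.val + t.val < R)
    (hle : (s + (t - u)).val + u.val < R) :
    (s + (t - u)).val + u.val = s.val + t.val := by
  rw [← ZMod.val_add_of_lt hle, ← ZMod.val_add_of_lt hlt, add_assoc, sub_add_cancel]

theorem le_val_add_of_val_lt {t τ : ZMod R} (hτ : D ≤ τ.val) (hτ' : τ.val + D ≤ R)
    (ht : t.val < D) : D ≤ (t + τ).val := by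
  rw [ZMod.val_add_of_lt (by omega)]
  omega

/-- The value at the shift `D` is `g D - A 0`, which bounds `A 0`. -/
theorem not_gt_gap_of_eq_add_secondDiff (hD : 0 < D) (hDR : 2 * D < R) {A F g : ZMod R → L}
    (hA : ∀ τ, τ ≠ 0 → A τ = 0)
    (hF : ∀ τ, F τ = g τ + (2 * A τ - A (τ - D) - A (τ + D)))
    (hgap : ∀ τ, g τ = 0 ∨ ∃ τ' : ZMod R, D < τ'.val ∧ τ'.val + D < R ∧ g τ' = g τ) :
    ¬∃ τ₀, ∀ τ : ZMod R, D ≤ τ.val → τ.val + D ≤ R → v (F τ) < v (F τ₀) := by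
  rintro ⟨τ₀, hgt⟩
  have hvalD : (D : ZMod R).val = D := ZMod.val_natCast_of_lt (by omega)
  have hA_of_val {τ : ZMod R} (h : τ.val ≠ 0) : A τ = 0 := hA τ ((ZMod.val_ne_zero τ).mp h)
  have hAD {τ : ZMod R} (h : τ.val + D < R) : A (τ + D) = 0 :=
    hA_of_val (by rw [ZMod.val_add_of_lt (by rwa [hvalD]), hvalD]; omega)
  have hgD := hgt D hvalD.ge (by omega)
  have hβ : v (F τ₀) ≠ 0 := (zero_le.trans_lt hgD).ne'
  have hvg (τ : ZMod R) : v (g τ) < v (F τ₀) := by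
    rcases hgap τ with h | ⟨τ', h₁, h₂, h⟩
    · rw [h, map_zero]
      exact zero_lt_iff.mpr hβ
    · have hsub : A (τ' - D) = 0 := hA _ (sub_ne_zero.mpr fun h => by rw [h, hvalD] at h₁; omega)
      have := hF τ'
      rw [hA_of_val (by omega), hsub, hAD h₂, mul_zero, sub_zero, sub_zero, add_zero] at this
      rw [← h, ← this]
      exact hgt τ' h₁.le h₂.le
  have hA0 : v (A 0) < v (F τ₀) := by
    have hFD := hF D
    rw [hA_of_val (by omega), sub_self, hAD (by omega), mul_zero, zero_sub, sub_zero] at hFD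
    rw [show A 0 = g D - F D by rw [hFD]; ring]
    exact v.map_sub_lt (hvg D) hgD
  have hvA (τ : ZMod R) : v (A τ) < v (F τ₀) := by
    rcases eq_or_ne τ 0 with rfl | hτ
    · exact hA0
    · rw [hA τ hτ, map_zero]
      exact zero_lt_iff.mpr hβ
  refine lt_irrefl (v (F τ₀)) ?_
  conv_lhs => rw [hF τ₀, two_mul]
  exact v.map_add_lt (hvg _) (v.map_sub_lt (v.map_sub_lt (v.map_add_lt (hvA _) (hvA _)) (hvA _))
    (hvA _))

variable [NeZero R]

/-- The leftmost maximum of `c` and the rightmost maximum of `c'` face each other at a shift where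
their product dominates the correlation. -/
theorem exists_valuation_corr_eq (hDR : 2 * D ≤ R) (hV₀ : 0 < V₀) {c c' : ZMod R → L}
    (hc : ∀ t, D ≤ t.val → v (c t) < V₀) (hc' : ∀ t, D ≤ t.val → v (c' t) < V₀)
    (hl : ∃ t, V₀ ≤ v (c t)) (hl' : ∃ t, V₀ ≤ v (c' t)) :
    ∃ μ μ', V₀ ≤ μ ∧ V₀ ≤ μ' ∧ (∀ t, v (c t) ≤ μ) ∧ (∀ t, v (c' t) ≤ μ') ∧
      ∃ τ, v (corr c c' τ) = μ * μ' := by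
  obtain ⟨t₀, ht₀⟩ := exists_max_fst_max_snd (fun t => v (c t)) fun t => OrderDual.toDual t.val
  obtain ⟨s₀, hs₀⟩ := exists_max_fst_max_snd (fun t => v (c' t)) fun t => t.val
  have hmax (t : ZMod R) : v (c t) ≤ v (c t₀) := (ht₀ t).elim le_of_lt fun h => h.1.le
  have hmax' (t : ZMod R) : v (c' t) ≤ v (c' s₀) := (hs₀ t).elim le_of_lt fun h => h.1.le
  have hμ : V₀ ≤ v (c t₀) := hl.elim fun t h => h.trans (hmax t)
  have hμ' : V₀ ≤ v (c' s₀) := hl'.elim fun t h => h.trans (hmax' t)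
  refine ⟨_, _, hμ, hμ', hmax, hmax', s₀ - t₀, ?_⟩
  have hunique (t : ZMod R) (h : v (c t) = v (c t₀))
      (h' : v (c' (t + (s₀ - t₀))) = v (c' s₀)) : t = t₀ := by
    have hlt {a : ZMod R → L} (ha : ∀ t, D ≤ t.val → v (a t) < V₀) {u : ZMod R}
        (hu : V₀ ≤ v (a u)) : u.val < D := not_le.mp fun hD => (ha u hD).not_ge hu
    have h₁ := hlt hc (hμ.trans h.ge)
    have h₂ := hlt hc' (hμ'.trans h'.ge)
    have h₃ := hlt hc hμ
    have h₄ := hlt hc' hμ'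
    have hleft : t₀.val ≤ t.val := ((ht₀ t).resolve_left h.not_lt).2
    have hright := ((hs₀ (t + (s₀ - t₀))).resolve_left h'.not_lt).2
    have := val_add_sub_add_val (s := t) (t := s₀) (u := t₀) (by omega) (by omega)
    exact ZMod.val_injective R (by omega)
  have hdom : ∀ t ∈ Finset.univ \ {t₀}, v (c t * c' (t + (s₀ - t₀))) <
      v (c t₀ * c' (t₀ + (s₀ - t₀))) := fun t ht => by
    rw [add_sub_cancel, map_mul, map_mul]
    refine mul_lt_mul_of_le_of_le_of_lt_or_lt (hV₀.trans_le hμ) (hV₀.trans_le hμ') (hmax t)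
      (hmax' _) (Classical.or_iff_not_imp_left.mpr fun h => (hmax' _).lt_of_ne fun h' => ?_)
    simp only [Finset.mem_sdiff, Finset.mem_univ, Finset.mem_singleton, true_and] at ht
    exact ht (hunique t ((hmax t).antisymm (not_lt.mp h)) h')
  rw [corr, v.map_sum_eq_of_lt (Finset.mem_univ t₀) hdom, add_sub_cancel, map_mul]

theorem valuation_corr_lt_of_mem_gap {c c' : ZMod R → L} (hV₀ : 0 < V₀)
    (hc : ∀ t, D ≤ t.val → v (c t) < V₀) (hc' : ∀ t, D ≤ t.val → v (c' t) < V₀)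
    {μ μ' : Γ₀} (hμ : V₀ ≤ μ) (hμ' : V₀ ≤ μ') (hmax : ∀ t, v (c t) ≤ μ)
    (hmax' : ∀ t, v (c' t) ≤ μ') {τ : ZMod R} (hτ : D ≤ τ.val) (hτ' : τ.val + D ≤ R) :
    v (corr c c' τ) < μ * μ' := by
  have hpos := hV₀.trans_le hμ
  have hpos' := hV₀.trans_le hμ'
  refine v.map_sum_lt (mul_pos hpos hpos').ne' fun t _ => ?_
  rw [map_mul]
  refine mul_lt_mul_of_le_of_le_of_lt_or_lt hpos hpos' (hmax t) (hmax' _) ?_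
  rcases le_or_gt D t.val with ht | ht
  · exact .inl ((hc t ht).trans_le hμ)
  · exact .inr ((hc' _ (le_val_add_of_val_lt hτ hτ' ht)).trans_le hμ')

theorem exists_valuation_corr_gt_gap (hDR : 2 * D ≤ R) (hV₀ : 0 < V₀) {c c' : ZMod R → L}
    (hc : ∀ t, D ≤ t.val → v (c t) < V₀) (hc' : ∀ t, D ≤ t.val → v (c' t) < V₀)
    (hl : ∃ t, V₀ ≤ v (c t)) (hl' : ∃ t, V₀ ≤ v (c' t)) :
    ∃ τ₀, V₀ * V₀ ≤ v (corr c c' τ₀) ∧ ∀ τ : ZMod R, D ≤ τ.val → τ.val + D ≤ R →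
      v (corr c c' τ) < v (corr c c' τ₀) := by
  obtain ⟨μ, μ', hμ, hμ', hmax, hmax', τ₀, hτ₀⟩ :=
    exists_valuation_corr_eq hDR hV₀ hc hc' hl hl'
  refine ⟨τ₀, hτ₀ ▸ mul_le_mul' hμ hμ', fun τ hτ hτ' => hτ₀ ▸ ?_⟩
  exact valuation_corr_lt_of_mem_gap hV₀ hc hc' hμ hμ' hmax hmax' hτ hτ'

theorem forall_lt_or_forall_lt_of_corr_eq_gap (hDR : 2 * D ≤ R) (hV₀ : 0 < V₀)
    {c c' : ZMod R → L} (hc : ∀ t, D ≤ t.val → v (c t) < V₀)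
    (hc' : ∀ t, D ≤ t.val → v (c' t) < V₀)
    (hgap : ∀ τ, ∃ τ' : ZMod R, D ≤ τ'.val ∧ τ'.val + D ≤ R ∧ corr c c' τ' = corr c c' τ) :
    (∀ t, v (c t) < V₀) ∨ ∀ t, v (c' t) < V₀ := by
  by_contra! hlarge
  obtain ⟨τ₀, -, hτ₀⟩ := exists_valuation_corr_gt_gap hDR hV₀ hc hc' hlarge.1 hlarge.2
  obtain ⟨τ', h₁, h₂, heq⟩ := hgap τ₀
  exact (hτ₀ τ' h₁ h₂).ne (congrArg v heq)

theorem exists_valuation_sum_corr_gt_gap {ι : Type*} [Fintype ι] (hDR : 2 * D ≤ R)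
    (hV₀ : 0 < V₀) {c c' : ι → ZMod R → L} (hc : ∀ j t, D ≤ t.val → v (c j t) < V₀)
    (hiff : ∀ j t, v (c' j t) < V₀ ↔ v (c j t) < V₀)
    (hcross : ∀ j k, j ≠ k → (∀ t, v (c j t) < V₀) ∨ ∀ t, v (c k t) < V₀)
    {j : ι} (hlarge : ∃ t, V₀ ≤ v (c j t)) :
    ∃ τ₀, ∀ τ : ZMod R, D ≤ τ.val → τ.val + D ≤ R →
      v (∑ k, corr (c k) (c' k) τ) < v (∑ k, corr (c k) (c' k) τ₀) := by
  classical
  obtain ⟨t, ht⟩ := hlarge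
  obtain ⟨τ₀, hVβ, hpeak⟩ := exists_valuation_corr_gt_gap hDR hV₀ (hc j)
    (fun t ht => (hiff j t).mpr (hc j t ht)) ⟨t, ht⟩
    ⟨t, not_lt.mp fun h => ht.not_gt ((hiff j t).mp h)⟩
  have hβ : v (corr (c j) (c' j) τ₀) ≠ 0 := ((mul_pos hV₀ hV₀).trans_le hVβ).ne'
  have hother (k : ι) (hk : k ≠ j) (τ : ZMod R) :
      v (corr (c k) (c' k) τ) < v (corr (c j) (c' j) τ₀) := by
    have hsmall := (hcross k j hk).resolve_right fun h => ht.not_gt (h t)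
    refine v.map_sum_lt hβ fun t _ => lt_of_lt_of_le ?_ hVβ
    rw [map_mul]
    exact mul_lt_mul'' (hsmall t) ((hiff k _).mpr (hsmall _)) zero_le zero_le
  have hrest (τ : ZMod R) : v (∑ k ∈ Finset.univ.erase j, corr (c k) (c' k) τ) <
      v (corr (c j) (c' j) τ₀) :=
    v.map_sum_lt hβ fun k hk => hother k (Finset.ne_of_mem_erase hk) τ
  refine ⟨τ₀, fun τ hτ hτ' => ?_⟩
  rw [← Finset.add_sum_erase _ _ (Finset.mem_univ j),
    ← Finset.add_sum_erase _ _ (Finset.mem_univ j), v.map_add_eq_of_lt_left (hrest τ₀)]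
  exact v.map_add_lt (hpeak τ hτ hτ') (hrest τ)

end Peak

section OrthogonalArray

variable {G L ι : Type*} [AddCommGroup G] [Fintype G] [Field L] [Fintype ι]

/-- A family of nowhere vanishing functions with the Array Orthogonality Property: distinct members
are uncorrelated at every shift, and the autocorrelations add up to `0` at every nonzero shift. -/
structure IsOrthogonalArray (X : ι → G → L) : Prop where
  ne_zero : ∀ j t, X j t ≠ 0
  cross : ∀ j k, j ≠ k → ∀ τ, corr (X j) (X k)⁻¹ τ = 0
  auto : ∀ τ, τ ≠ 0 → ∑ j, corr (X j) (X j)⁻¹ τ = 0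

namespace IsOrthogonalArray

theorem corr_cyclicDiff_eq_zero {X : ι → G → L} (hX : IsOrthogonalArray X) {j k : ι} (hjk : j ≠ k)
    (s τ : G) : corr (cyclicDiff s (X j)) (cyclicDiff s (X k)⁻¹) τ = 0 := by
  simp only [corr_cyclicDiff, hX.cross j k hjk, mul_zero, sub_zero]

variable {R D P : ℕ} [NeZero R] {Γ₀ : Type*} [LinearOrderedCommGroupWithZero Γ₀]
  {v : Valuation L Γ₀} {V₀ : Γ₀} {X e e' : ι → ZMod R → L}

theorem forall_valuation_cyclicDiff_lt (hX : IsOrthogonalArray X) (hD : 0 < D) (hDR : 2 * D < R)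
    (hV₀ : 0 < V₀) (hsmall : ∀ j t, D ≤ t.val → v (cyclicDiff (D : ZMod R) (X j) t) < V₀)
    (hiff : ∀ j t, v (cyclicDiff (D : ZMod R) (X j)⁻¹ t) < V₀ ↔
      v (cyclicDiff (D : ZMod R) (X j) t) < V₀) (j : ι) (t : ZMod R) :
    v (cyclicDiff (D : ZMod R) (X j) t) < V₀ := by
  by_contra! hlarge
  have hcross (j k : ι) (hjk : j ≠ k) : (∀ t, v (cyclicDiff (D : ZMod R) (X j) t) < V₀) ∨
      ∀ t, v (cyclicDiff (D : ZMod R) (X k) t) < V₀ := by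
    simp only [← hiff k]
    have hD_val : (D : ZMod R).val = D := ZMod.val_natCast_of_lt (by omega)
    refine forall_lt_or_forall_lt_of_corr_eq_gap hDR.le hV₀ (hsmall j)
      (fun t ht => (hiff k t).mpr (hsmall k t ht)) fun τ => ⟨D, hD_val.ge, by omega, ?_⟩
    simp only [hX.corr_cyclicDiff_eq_zero hjk]
  refine not_gt_gap_of_eq_add_secondDiff hD hDR hX.auto (g := 0) (fun τ => ?_) (fun _ => .inl rfl)
    (exists_valuation_sum_corr_gt_gap hDR.le hV₀ hsmall hiff hcross ⟨t, hlarge⟩)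
  simp only [corr_cyclicDiff, Finset.sum_sub_distrib, Finset.mul_sum, Pi.zero_apply, zero_add]

/-- The periodic corrections `e`, `e'` perturb correlations by a periodic function of the shift, so
a correlation that vanishes identically stays periodic and is determined by its values in the
gap. -/
theorem forall_lt_or_forall_lt (hX : IsOrthogonalArray X) (hP : 0 < P) (hD : 0 < D)
    (hDR : 2 * D + P ≤ R + 1) (hV₀ : 0 < V₀)
    (he : ∀ j, Function.Periodic (e j) P) (he' : ∀ j, Function.Periodic (e' j) P)
    (hsmall : ∀ j t, D ≤ t.val → v ((cyclicDiff (D : ZMod R) (X j) - e j) t) < V₀)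
    (hiff : ∀ j t, v ((cyclicDiff (D : ZMod R) (X j)⁻¹ - e' j) t) < V₀ ↔
      v ((cyclicDiff (D : ZMod R) (X j) - e j) t) < V₀) {j k : ι} (hjk : j ≠ k) :
    (∀ t, v ((cyclicDiff (D : ZMod R) (X j) - e j) t) < V₀) ∨
      ∀ t, v ((cyclicDiff (D : ZMod R) (X k) - e k) t) < V₀ := by
  simp only [← hiff k]
  refine forall_lt_or_forall_lt_of_corr_eq_gap (by omega) hV₀ (hsmall j)
    (fun t ht => (hiff k t).mpr (hsmall k t ht)) fun τ => ?_
  have hper := periodic_corr_sub_sub_corr (cyclicDiff (D : ZMod R) (X j))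
    (cyclicDiff (D : ZMod R) (X k)⁻¹) (he j) (he' k)
  obtain ⟨τ', h₁, h₂, h⟩ := exists_val_mem_window_eq_of_periodic hP hper (w := D) (by omega) τ
  refine ⟨τ', h₁, by omega, ?_⟩
  simpa only [Pi.sub_apply, hX.corr_cyclicDiff_eq_zero hjk, sub_zero] using h

theorem forall_valuation_cyclicDiff_sub_lt (hX : IsOrthogonalArray X) (hP : 0 < P) (hD : 0 < D)
    (hDR : 2 * D + P < R) (hV₀ : 0 < V₀) (he : ∀ j, Function.Periodic (e j) P)
    (he' : ∀ j, Function.Periodic (e' j) P)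
    (hsmall : ∀ j t, D ≤ t.val → v ((cyclicDiff (D : ZMod R) (X j) - e j) t) < V₀)
    (hiff : ∀ j t, v ((cyclicDiff (D : ZMod R) (X j)⁻¹ - e' j) t) < V₀ ↔
      v ((cyclicDiff (D : ZMod R) (X j) - e j) t) < V₀) (j : ι) (t : ZMod R) :
    v ((cyclicDiff (D : ZMod R) (X j) - e j) t) < V₀ := by
  by_contra! hlarge
  let g : ZMod R → L := ∑ j, (corr (cyclicDiff (D : ZMod R) (X j) - e j)
    (cyclicDiff (D : ZMod R) (X j)⁻¹ - e' j) -
      corr (cyclicDiff (D : ZMod R) (X j)) (cyclicDiff (D : ZMod R) (X j)⁻¹))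
  have hg : Function.Periodic g P := fun τ => by
    simp only [g, Finset.sum_apply, periodic_corr_sub_sub_corr _ _ (he _) (he' _) τ]
  refine not_gt_gap_of_eq_add_secondDiff hD (by omega) hX.auto (g := g) (fun τ => ?_)
    (fun τ => ?_) (exists_valuation_sum_corr_gt_gap (by omega) hV₀ hsmall hiff
      (fun j k => hX.forall_lt_or_forall_lt hP hD (by omega) hV₀ he he' hsmall hiff) ⟨t, hlarge⟩)
  · simp only [g, Finset.sum_apply, Pi.sub_apply, corr_cyclicDiff, Finset.sum_sub_distrib,
      Finset.mul_sum]
    ring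
  · obtain ⟨τ', h₁, h₂, h⟩ :=
      exists_val_mem_window_eq_of_periodic hP hg (w := D + 1) (by omega) τ
    exact .inr ⟨τ', h₁, by omega, h⟩

end IsOrthogonalArray

end OrthogonalArray

section Wrap

variable {α : Type*} {R : ℕ}

/-- The sequence `x` cut off to the period `0, …, R - 1`; it forgets `x` outside `[0, R)`. -/
def wrap (R : ℕ) (x : ℤ → α) (t : ZMod R) : α := x t.val

theorem wrap_inv [Inv α] (x : ℤ → α) : wrap R x⁻¹ = (wrap R x)⁻¹ := rfl

theorem eq_of_periodic_of_forall_mem_Ico {f g : ℤ → α} {D : ℕ} (hD : 0 < D)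
    (hf : Function.Periodic f D) (hg : Function.Periodic g D)
    (h : ∀ i : ℤ, 0 ≤ i → i < D → f i = g i) : f = g := by
  ext i
  obtain ⟨y, ⟨hy₀, hyD⟩, hy⟩ := Function.Periodic.exists_mem_Ico₀
    (f := fun i => (f i, g i)) (c := (D : ℤ)) (fun i => Prod.ext (hf i) (hg i)) (by omega) i
  have := Prod.ext_iff.mp hy
  exact this.1.trans ((h y hy₀ hyD).trans this.2.symm)

variable [NeZero R]

theorem wrap_intCast (x : ℤ → α) {i : ℤ} (h₀ : 0 ≤ i) (hR : i < R) : wrap R x i = x i := by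
  rw [wrap, ZMod.val_intCast, Int.emod_eq_of_lt h₀ hR]

theorem wrap_intCast_of_periodic {x : ℤ → α} (hx : Function.Periodic x R) (i : ℤ) :
    wrap R x i = x i := by
  rw [wrap, ZMod.val_intCast, Int.emod_def, mul_comm]
  exact hx.sub_int_mul_eq _

theorem wrap_sub_natCast (x : ℤ → α) {D : ℕ} {t : ZMod R} (h : D ≤ t.val) :
    wrap R x (t - D) = x (t.val - D) := by
  have := t.val_lt
  rw [← wrap_intCast (R := R) x (i := t.val - D) (by omega) (by omega)]
  simp only [Int.cast_sub, Int.cast_natCast, ZMod.natCast_zmod_val]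

theorem wrap_intCast_sub_natCast (x : ℤ → α) {D : ℕ} {i : ℤ} (h₀ : 0 ≤ i) (hi : i < D)
    (hDR : D ≤ R) : wrap R x ((i : ZMod R) - D) = x (i + R - D) := by
  rw [← wrap_intCast (R := R) x (i := i + R - D) (by omega) (by omega)]
  simp only [Int.cast_sub, Int.cast_add, Int.cast_natCast, CharP.cast_eq_zero, add_zero]

theorem periodic_wrap {x : ℤ → α} {q : ℕ} (hx : Function.Periodic x q) (hqR : q ∣ R) :
    Function.Periodic (wrap R x) (q : ZMod R) := fun t => by
  obtain ⟨r, hr⟩ := hqR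
  have hxR : Function.Periodic x R := by
    simpa only [hr, Nat.cast_mul, mul_comm] using hx.nat_mul r
  have hcast : t + (q : ZMod R) = ((t.val + q : ℤ) : ZMod R) := by
    simp only [Int.cast_add, Int.cast_natCast, ZMod.natCast_zmod_val]
  rw [hcast, wrap_intCast_of_periodic hxR, hx, wrap]

theorem sum_zmod_eq_sum_range {A : Type*} [AddCommMonoid A] (f : ZMod R → A) :
    ∑ t, f t = ∑ i ∈ Finset.range R, f i := by
  refine Finset.sum_nbij ZMod.val (fun t _ => Finset.mem_range.mpr t.val_lt)
    (fun s _ t _ h => ZMod.val_injective R h) (fun i hi => ?_) fun t _ => ?_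
  · exact ⟨i, Finset.mem_coe.mpr (Finset.mem_univ _),
      ZMod.val_natCast_of_lt (Finset.mem_range.mp hi)⟩
  · rw [ZMod.natCast_zmod_val]

theorem corr_wrap_natCast {A : Type*} [CommRing A] (x y : ℤ → A) {s : ℕ}
    (hs : s ≤ R) : corr (wrap R x) (wrap R y) s =
      ∑ i ∈ Finset.range (R - s), x i * y (i + s) +
        ∑ i ∈ Finset.range s, x (i + R - s) * y i := by
  have hwrap (w : ℤ → A) {i : ℤ} (h₀ : 0 ≤ i) (hR : i < R) {t : ZMod R} (ht : t = i) :
      wrap R w t = w i := by rw [ht, wrap_intCast w h₀ hR]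
  have hsplit (f : ℕ → A) : ∑ i ∈ Finset.range R, f i =
      ∑ i ∈ Finset.range (R - s), f i + ∑ i ∈ Finset.range s, f (R - s + i) := by
    rw [← Finset.sum_range_add, Nat.sub_add_cancel hs]
  rw [corr, sum_zmod_eq_sum_range, hsplit]
  congr 1 <;> refine Finset.sum_congr rfl fun i hi => ?_ <;> rw [Finset.mem_range] at hi
  · rw [hwrap x (i := i) (by omega) (by omega) (by simp),
      hwrap y (i := i + s) (by omega) (by omega) (by simp)]
  · rw [hwrap x (i := i + R - s) (by omega) (by omega)
        (by simp [Nat.cast_sub hs, sub_eq_neg_add, add_comm]),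
      hwrap y (i := i) (by omega) (by omega) (by simp [Nat.cast_sub hs])]

end Wrap

section Twist

variable {L : Type*} [Field L]

/-- A translation by `D` multiplies the sequence `x` by the `q`-periodic sequence `z` of `q`-th
roots of unity. -/
structure IsTwist (D q : ℕ) (x z : ℤ → L) : Prop where
  pow_eq_one : ∀ i, z i ^ q = 1
  periodic : Function.Periodic z q
  translate : ∀ i, x (i + D) = x i * z i

namespace IsTwist

variable {D q R : ℕ} {x z : ℤ → L}

theorem inv (h : IsTwist D q x z) : IsTwist D q x⁻¹ z⁻¹ where
  pow_eq_one i := by rw [Pi.inv_apply, inv_pow, h.pow_eq_one, inv_one]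
  periodic i := by rw [Pi.inv_apply, h.periodic, Pi.inv_apply]
  translate i := by simp only [Pi.inv_apply, h.translate, mul_inv]

theorem eq_mul_sub (h : IsTwist D q x z) (i : ℤ) : x i = x (i - D) * z (i - D) := by
  rw [← h.translate, sub_add_cancel]

theorem pow_translate (h : IsTwist D q x z) (i : ℤ) : x (i + D) ^ q = x i ^ q := by
  rw [h.translate, mul_pow, h.pow_eq_one, mul_one]

variable [NeZero R]

theorem wrap_eq (h : IsTwist D q x z) {t : ZMod R} (ht : D ≤ t.val) :
    wrap R x t = wrap R x (t - D) * z (t.val - D) := by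
  rw [wrap_sub_natCast x ht, wrap, h.eq_mul_sub]

theorem pow_add_length_eq (h : IsTwist D q x z) (hD : 0 < D) (hDR : D < R)
    (hwrap : ∀ t : ZMod R, wrap R x t ^ q = wrap R x (t - D) ^ q) (i : ℤ) :
    x (i + R) ^ q = x i ^ q := by
  refine congrFun (eq_of_periodic_of_forall_mem_Ico hD (f := fun i => x (i + R) ^ q)
    (g := fun i => x i ^ q) (fun i => ?_) h.pow_translate fun i h₀ hi => ?_) i
  · simp only [add_right_comm _ (D : ℤ), h.pow_translate]
  · have := hwrap i
    rw [wrap_intCast x h₀ (by omega), wrap_intCast_sub_natCast x h₀ hi hDR.le] at this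
    rw [this, ← h.pow_translate (i + R - D), sub_add_cancel]

theorem periodic_length (h : IsTwist D q x z) (hx : ∀ i, x i ≠ 0) (hD : 0 < D) (hDR : D < R)
    (hqR : q ∣ R) (hwrap : ∀ t : ZMod R, wrap R x t = wrap R x (t - D) * z (t.val - D)) :
    Function.Periodic x R := by
  obtain ⟨r, hr⟩ := hqR
  have hzR : Function.Periodic z R := by
    simpa only [hr, Nat.cast_mul, mul_comm] using h.periodic.nat_mul r
  have hz (i : ℤ) : z i ≠ 0 := right_ne_zero_of_mul (h.translate i ▸ hx _)
  have hratio := congrFun (eq_of_periodic_of_forall_mem_Ico hD (f := fun i => x (i + R) / x i)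
    (g := fun _ => 1) (fun i => ?_) (fun _ => rfl) fun i h₀ hi => ?_)
  · exact fun i => (div_eq_one_iff_eq (hx i)).mp (hratio i)
  · simp only [add_right_comm _ (D : ℤ), h.translate, hzR i, mul_div_mul_right _ _ (hz i)]
  · have hval : (((i : ZMod R).val : ℤ)) = i := by
      rw [ZMod.val_intCast, Int.emod_eq_of_lt h₀ (by omega)]
    have := hwrap i
    rw [wrap_intCast x h₀ (by omega), wrap_intCast_sub_natCast x h₀ hi hDR.le, hval] at this
    rw [div_eq_one_iff_eq (hx i), this, h.eq_mul_sub, ← hzR (i - D), sub_add_eq_add_sub]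

end IsTwist

/-- The sequences `x i = ω ^ ⌊P i / n⌋` with `P ∈ ℤ[X]` and `ω` a `K`-th root of unity, through
their behaviour under translation by `n m` for every factorization `K = m * k`. -/
structure IsFlooredPhase (n K : ℕ) (x : ℤ → L) : Prop where
  pow_eq_one : ∀ i, x i ^ K = 1
  exists_isTwist : ∀ m k, K = m * k → ∃ z, IsTwist (n * m) k x z

namespace IsFlooredPhase

variable {n K : ℕ} {x : ℤ → L}

theorem ne_zero (hx : IsFlooredPhase n K x) (hK : K ≠ 0) (i : ℤ) : x i ≠ 0 :=
  (IsUnit.of_pow_eq_one (hx.pow_eq_one i) hK).ne_zero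

theorem periodic (hx : IsFlooredPhase n K x) : Function.Periodic x (n * K : ℕ) := fun i => by
  obtain ⟨z, hz⟩ := hx.exists_isTwist K 1 (mul_one K).symm
  rw [hz.translate, ← pow_one (z i), hz.pow_eq_one, mul_one]

end IsFlooredPhase

open Polynomial in
theorem exists_ediv_eval_add_mul (P : ℤ[X]) {n : ℕ} (hn : n ≠ 0) (m : ℕ) :
    ∃ Q : ℤ[X], ∀ i : ℤ, P.eval (i + (n * m : ℕ)) / n = P.eval i / n + m * Q.eval i := by
  have hdvd : (C ((n * m : ℕ) : ℤ)) ∣ P.comp (X + C ((n * m : ℕ) : ℤ)) - P := by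
    have := Polynomial.sub_dvd_eval_sub (X + C ((n * m : ℕ) : ℤ)) X (P.map C)
    simpa [eval_map, comp] using this
  obtain ⟨Q, hQ⟩ := hdvd
  refine ⟨Q, fun i => ?_⟩
  have := congrArg (eval i) hQ
  simp only [eval_sub, eval_comp, eval_add, eval_X, eval_C, eval_mul] at this
  rw [sub_eq_iff_eq_add'.mp this, Nat.cast_mul, mul_assoc,
    Int.add_mul_ediv_left _ _ (by exact_mod_cast hn)]

theorem isFlooredPhase_zpow_ediv {ω : L} {n K : ℕ} (hn : n ≠ 0) (hω : ω ^ K = 1) (hω₀ : ω ≠ 0)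
    (P : Polynomial ℤ) : IsFlooredPhase n K fun i => ω ^ (P.eval i / n) where
  pow_eq_one i := by rw [← zpow_natCast, zpow_comm, zpow_natCast, hω, one_zpow]
  exists_isTwist m k hK := by
    obtain ⟨Q, hQ⟩ := exists_ediv_eval_add_mul P hn m
    have hroot : (ω ^ m) ^ k = 1 := by rw [← pow_mul, ← hK, hω]
    refine ⟨fun i => (ω ^ m) ^ Q.eval i, fun i => ?_, fun i => ?_, fun i => ?_⟩
    · rw [← zpow_natCast, zpow_comm, zpow_natCast, hroot, one_zpow]
    · obtain ⟨r, hr⟩ := Polynomial.sub_dvd_eval_sub (i + k) i Q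
      rw [add_sub_cancel_left, sub_eq_iff_eq_add'] at hr
      rw [hr, zpow_add₀ (pow_ne_zero m hω₀), zpow_mul, zpow_natCast, hroot, one_zpow, mul_one]
    · rw [hQ, zpow_add₀ hω₀, zpow_mul, zpow_natCast]

end Twist

section RowBound

variable {L ι : Type*} [Field L] [CharZero L] [Fintype ι] {n K R : ℕ} [NeZero R] {x : ι → ℤ → L}

theorem not_forall_periodic_length [Nonempty ι] (hx : ∀ j, IsFlooredPhase n K (x j))
    (hX : IsOrthogonalArray fun j => wrap R (x j)) (hn : 0 < n) (hK : 0 < K) (hnK : n * K < R) :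
    ¬∀ j, Function.Periodic (x j) R := by
  intro hper
  have hval : ((n * K : ℕ) : ZMod R).val = n * K := ZMod.val_natCast_of_lt hnK
  have hne : ((n * K : ℕ) : ZMod R) ≠ 0 :=
    (ZMod.val_ne_zero _).mp (by rw [hval]; exact (Nat.mul_pos hn hK).ne')
  have hinv (j : ι) (t : ZMod R) : wrap R (x j) (t + (n * K : ℕ)) = wrap R (x j) t := by
    have hcast : t + ((n * K : ℕ) : ZMod R) = ((t.val + (n * K : ℕ) : ℤ) : ZMod R) := by
      simp only [Int.cast_add, Int.cast_natCast, ZMod.natCast_zmod_val]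
    rw [hcast, wrap_intCast_of_periodic (hper j), (hx j).periodic, wrap]
  have hauto := hX.auto _ hne
  simp only [corr, Pi.inv_apply, hinv, mul_inv_cancel₀ (hX.ne_zero _ _), Finset.sum_const,
    Finset.card_univ, ZMod.card, nsmul_eq_mul, mul_one] at hauto
  exact mul_ne_zero (Nat.cast_ne_zero.mpr Fintype.card_ne_zero)
    (Nat.cast_ne_zero.mpr (NeZero.ne R)) hauto

theorem pow_add_length_eq_of_not_dvd (hx : ∀ j, IsFlooredPhase n K (x j))
    (hX : IsOrthogonalArray fun j => wrap R (x j)) (hn : 0 < n) (hnK : n * K < R)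
    {q e m : ℕ} (hq : q.Prime) (he : e ≠ 0) (hqm : ¬q ∣ m) (hK : K = q ^ e * m) (j : ι) (i : ℤ) :
    x j (i + R) ^ q ^ e = x j i ^ q ^ e := by
  obtain ⟨V, hV⟩ := exists_valuationSubring_valuation_natCast_lt_one (L := L) hq
  have hm : 0 < m := Nat.pos_of_ne_zero fun h => hqm (h ▸ dvd_zero q)
  have hD : 0 < n * m := Nat.mul_pos hn hm
  have hDR : 2 * (n * m) < R := by
    have hqe : 2 ≤ q ^ e := hq.two_le.trans (Nat.le_self_pow he q)
    calc 2 * (n * m) ≤ q ^ e * (n * m) := Nat.mul_le_mul_right _ hqe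
      _ = n * K := by rw [hK]; ring
      _ < R := hnK
  choose z hz using fun j => (hx j).exists_isTwist m (q ^ e) (hK.trans (mul_comm _ _))
  have hroot (j : ι) (t : ZMod R) : wrap R (x j) t ^ (q ^ e * m) = 1 := hK ▸ (hx j).pow_eq_one _
  have hiff (j : ι) (t : ZMod R) :
      V.valuation (cyclicDiff ((n * m : ℕ) : ZMod R) (wrap R (x j)) t) < 1 ↔
        wrap R (x j) t ^ q ^ e = wrap R (x j) (t - (n * m : ℕ)) ^ q ^ e :=
    valuation_sub_lt_one_iff_pow_eq hq hV hqm (hroot j _) (hroot j _)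
  have hiff_inv (j : ι) (t : ZMod R) :
      V.valuation (cyclicDiff ((n * m : ℕ) : ZMod R) (wrap R (x j))⁻¹ t) < 1 ↔
        wrap R (x j) t ^ q ^ e = wrap R (x j) (t - (n * m : ℕ)) ^ q ^ e := by
    rw [cyclicDiff, Pi.inv_apply, Pi.inv_apply, valuation_sub_lt_one_iff_pow_eq hq hV hqm
      (by rw [inv_pow, hroot, inv_one]) (by rw [inv_pow, hroot, inv_one]), inv_pow, inv_pow,
      inv_inj]
  refine (hz j).pow_add_length_eq hD (by omega) (fun t => (hiff j t).mp ?_) i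
  refine hX.forall_valuation_cyclicDiff_lt hD hDR one_pos (fun j t ht => (hiff j t).mpr ?_)
    (fun j t => (hiff_inv j t).trans (hiff j t).symm) j t
  rw [(hz j).wrap_eq ht, mul_pow, (hz j).pow_eq_one, mul_one]

theorem eq_one_or_prime_pow_or_two_primes (hK : K ≠ 0) :
    K = 1 ∨ (∃ q e, q.Prime ∧ e ≠ 0 ∧ K = q ^ e) ∨
      ∃ q l, q.Prime ∧ l.Prime ∧ q ≠ l ∧ q ∣ K ∧ l ∣ K := by
  rcases eq_or_ne K 1 with h1 | h1
  · exact .inl h1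
  have hq := Nat.minFac_prime h1
  by_cases h : ∀ l, l.Prime → l ∣ K → l = K.minFac
  · refine .inr (.inl ⟨K.minFac, K.primeFactorsList.length, hq, ?_,
      Nat.eq_prime_pow_of_unique_prime_dvd hK fun hl => h _ hl⟩)
    simpa [Nat.primeFactorsList_eq_nil] using ⟨hK, h1⟩
  · push Not at h
    obtain ⟨l, hl, hlK, hne⟩ := h
    exact .inr (.inr ⟨_, l, hq, hl, hne.symm, K.minFac_dvd, hlK⟩)

theorem periodic_length_of_two_primes (hx : ∀ j, IsFlooredPhase n K (x j))
    (hX : IsOrthogonalArray fun j => wrap R (x j)) (hn : 0 < n) (hK : K ≠ 0) (hnK : n * K < R)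
    {q l : ℕ} (hq : q.Prime) (hl : l.Prime) (hne : q ≠ l) (hqK : q ∣ K) (hlK : l ∣ K) (j : ι) :
    Function.Periodic (x j) R := by
  have key {p : ℕ} (hp : p.Prime) (hpK : p ∣ K) (i : ℤ) :
      ∃ e, (x j (i + R) / x j i) ^ p ^ e = 1 := by
    obtain ⟨e, m, hpm, hKm⟩ := Nat.exists_eq_pow_mul_and_not_dvd hK p hp.ne_one
    have he : e ≠ 0 := fun he => hpm (by simpa only [hKm, he, pow_zero, one_mul] using hpK)
    exact ⟨e, by rw [div_pow, pow_add_length_eq_of_not_dvd hx hX hn hnK hp he hpm hKm,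
      div_self (pow_ne_zero _ ((hx j).ne_zero hK i))]⟩
  intro i
  obtain ⟨e, he⟩ := key hq hqK i
  obtain ⟨f, hf⟩ := key hl hlK i
  have hcop : Nat.Coprime (q ^ e) (l ^ f) :=
    Nat.Coprime.pow _ _ ((Nat.coprime_primes hq hl).mpr hne)
  rw [← div_eq_one_iff_eq ((hx j).ne_zero hK i), ← orderOf_eq_one_iff]
  exact Nat.eq_one_of_dvd_coprimes hcop (orderOf_dvd_of_pow_eq_one he)
    (orderOf_dvd_of_pow_eq_one hf)

end RowBound

section PrimePower

variable {L ι : Type*} [Field L] {R q e D : ℕ}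

theorem IsTwist.valuation_cyclicDiff_sub_lt_iff {Γ₀ : Type*} [LinearOrderedCommGroupWithZero Γ₀]
    {v : Valuation L Γ₀} (hq : q.Prime) (hv : v (q : L) < 1) {ζ : L} (hζ : IsPrimitiveRoot ζ q)
    {x z : ℤ → L} (hz : IsTwist D q x z) (hroot : ∀ i, x i ^ q ^ e = 1) (t : ZMod R) :
    v ((cyclicDiff (D : ZMod R) (wrap R x) - wrap R fun i => z (i - D) - 1) t) < v (ζ - 1) ↔
      wrap R x t = wrap R x (t - D) * z (t.val - D) :=
  valuation_sub_sub_lt_iff_eq_mul hq hv hζ (hroot _) (hroot _) (hz.pow_eq_one _)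

theorem IsTwist.valuation_cyclicDiff_inv_sub_lt_iff {Γ₀ : Type*}
    [LinearOrderedCommGroupWithZero Γ₀] {v : Valuation L Γ₀} (hq : q.Prime) (hv : v (q : L) < 1)
    {ζ : L} (hζ : IsPrimitiveRoot ζ q) {x z : ℤ → L} (hz : IsTwist D q x z)
    (hroot : ∀ i, x i ^ q ^ e = 1) (t : ZMod R) :
    v ((cyclicDiff (D : ZMod R) (wrap R x)⁻¹ - wrap R fun i => z⁻¹ (i - D) - 1) t) < v (ζ - 1) ↔
      v ((cyclicDiff (D : ZMod R) (wrap R x) - wrap R fun i => z (i - D) - 1) t) < v (ζ - 1) := by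
  rw [hz.valuation_cyclicDiff_sub_lt_iff hq hv hζ hroot]
  refine (hz.inv.valuation_cyclicDiff_sub_lt_iff hq hv hζ (e := e) (fun i => ?_) t).trans ?_
  · rw [Pi.inv_apply, inv_pow, hroot, inv_one]
  · simp only [wrap, Pi.inv_apply, ← mul_inv, inv_inj]

variable [NeZero R]

theorem prime_dvd_length_of_corr_eq_zero [CharZero L] (hq : q.Prime) {a b : ZMod R → L}
    (ha : ∀ t, a t ^ q ^ e = 1) (hb : ∀ t, b t ^ q ^ e = 1) {τ : ZMod R}
    (hcorr : corr a b⁻¹ τ = 0) : q ∣ R := by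
  obtain ⟨V, hV⟩ := exists_valuationSubring_valuation_natCast_lt_one (L := L) hq
  have := prime_dvd_card_sub_of_sum_eq hq hV (s := Finset.univ) (k := 0)
    (fun t _ => valuation_sub_one_lt_one_of_pow_prime_pow_eq_one hq hV (e := e) (by
      rw [mul_pow, ha, Pi.inv_apply, inv_pow, hb, inv_one, one_mul]))
    (hcorr.trans Int.cast_zero.symm)
  rw [Finset.card_univ, ZMod.card, sub_zero] at this
  exact_mod_cast this

theorem IsOrthogonalArray.prime_dvd_length [CharZero L] [Fintype ι] [Nonempty ι]
    {X : ι → ZMod R → L}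
    (hX : IsOrthogonalArray X) (hq : q.Prime) (hroot : ∀ j t, X j t ^ q ^ e = 1) (hR : 1 < R) :
    q ∣ R := by
  obtain ⟨j⟩ := ‹Nonempty ι›
  rcases subsingleton_or_nontrivial ι with _ | _
  · have : Fact (1 < R) := ⟨hR⟩
    have hauto := hX.auto 1 one_ne_zero
    rw [Fintype.sum_subsingleton _ j] at hauto
    exact prime_dvd_length_of_corr_eq_zero hq (hroot j) (hroot j) hauto
  · obtain ⟨k, hk⟩ := exists_ne j
    exact prime_dvd_length_of_corr_eq_zero hq (hroot k) (hroot j) (hX.cross k j hk 0)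

theorem IsTwist.periodic_wrap_sub_one {x z : ℤ → L} (hz : IsTwist D q x z) (hqR : q ∣ R) :
    Function.Periodic (wrap R fun i => z (i - D) - 1) (q : ZMod R) :=
  periodic_wrap (fun i => by simp only [add_sub_right_comm, hz.periodic _]) hqR

variable [CharZero L] [Fintype ι] {x z : ι → ℤ → L} {ζ : L}

theorem periodic_length_or_periodic_length (hX : IsOrthogonalArray fun j => wrap R (x j))
    (hq : q.Prime) (hζ : IsPrimitiveRoot ζ q) (hz : ∀ j, IsTwist D q (x j) (z j))
    (hroot : ∀ j i, x j i ^ q ^ e = 1) (hqR : q ∣ R) (hD : 0 < D) (hDR : 2 * D + q ≤ R + 1)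
    {j k : ι} (hjk : j ≠ k) :
    Function.Periodic (x j) R ∨ Function.Periodic (x k) R := by
  obtain ⟨V, hV⟩ := exists_valuationSubring_valuation_natCast_lt_one (L := L) hq
  have hiff (j : ι) := (hz j).valuation_cyclicDiff_sub_lt_iff (R := R) hq hV hζ (hroot j)
  have hper (j : ι) (h : ∀ t : ZMod R, wrap R (x j) t = wrap R (x j) (t - D) * z j (t.val - D)) :
      Function.Periodic (x j) R :=
    (hz j).periodic_length (fun i =>
      (IsUnit.of_pow_eq_one (hroot j i) (pow_ne_zero e hq.ne_zero)).ne_zero) hD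
      (by have := hq.two_le; omega) hqR h
  have hdich := hX.forall_lt_or_forall_lt (v := V.valuation) hq.pos hD hDR
    (V.valuation.pos_iff.mpr (sub_ne_zero.mpr (hζ.ne_one hq.one_lt)))
    (fun j => (hz j).periodic_wrap_sub_one hqR) (fun j => (hz j).inv.periodic_wrap_sub_one hqR)
    (fun j t ht => (hiff j t).mpr ((hz j).wrap_eq ht))
    (fun j => (hz j).valuation_cyclicDiff_inv_sub_lt_iff hq hV hζ (hroot j)) hjk
  simp only [hiff] at hdich
  exact hdich.imp (hper j) (hper k)

theorem periodic_length_of_gap (hX : IsOrthogonalArray fun j => wrap R (x j))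
    (hq : q.Prime) (hζ : IsPrimitiveRoot ζ q) (hz : ∀ j, IsTwist D q (x j) (z j))
    (hroot : ∀ j i, x j i ^ q ^ e = 1) (hqR : q ∣ R) (hD : 0 < D) (hDR : 2 * D + q < R) (j : ι) :
    Function.Periodic (x j) R := by
  obtain ⟨V, hV⟩ := exists_valuationSubring_valuation_natCast_lt_one (L := L) hq
  have hiff (j : ι) := (hz j).valuation_cyclicDiff_sub_lt_iff (R := R) hq hV hζ (hroot j)
  refine (hz j).periodic_length (fun i => ?_) hD (by omega) hqR fun t => (hiff j t).mp ?_
  · exact (IsUnit.of_pow_eq_one (hroot j i) (pow_ne_zero e hq.ne_zero)).ne_zero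
  · exact hX.forall_valuation_cyclicDiff_sub_lt (v := V.valuation) hq.pos hD hDR
      (V.valuation.pos_iff.mpr (sub_ne_zero.mpr (hζ.ne_one hq.one_lt)))
      (fun j => (hz j).periodic_wrap_sub_one hqR) (fun j => (hz j).inv.periodic_wrap_sub_one hqR)
      (fun j t ht => (hiff j t).mpr ((hz j).wrap_eq ht))
      (fun j => (hz j).valuation_cyclicDiff_inv_sub_lt_iff hq hV hζ (hroot j)) j t

end PrimePower

section Exceptional

variable {L : Type*} [Field L] {R : ℕ} [NeZero R] {D : ℕ}

theorem corr_wrap_inv_two {x z : ℤ → L} (hz : IsTwist D 2 x z) (hx : ∀ i, x i ≠ 0)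
    (hper : Function.Periodic x (2 * D : ℕ)) (hR : R = 2 * D + 2) :
    corr (wrap R x) (wrap R x)⁻¹ 2 = 2 * (1 + ∑ i ∈ Finset.range D, x i * (x (i + 2))⁻¹) := by
  have htranslate (i : ℤ) : x (i + D) * (x (i + D + 2))⁻¹ = x i * (x (i + 2))⁻¹ := by
    have hzi : z i ≠ 0 := right_ne_zero_of_mul (hz.translate i ▸ hx _)
    rw [add_right_comm, hz.translate, hz.translate, ← Nat.cast_two, hz.periodic, mul_inv]
    field_simp
  have hwrapped (i : ℕ) : x (i + R - 2) * (x i)⁻¹ = 1 := by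
    rw [show (i + R - 2 : ℤ) = i + (2 * D : ℕ) by omega, hper, mul_inv_cancel₀ (hx _)]
  have := corr_wrap_natCast (R := R) x x⁻¹ (s := 2) (by omega)
  simp only [Nat.cast_ofNat, Pi.inv_apply, hwrapped, Finset.sum_const, Finset.card_range,
    show R - 2 = D + D by omega, Finset.sum_range_add, Nat.cast_add, nsmul_one] at this
  have h2 (i : ℕ) : x (D + i) * (x (D + i + 2))⁻¹ = x i * (x (i + 2))⁻¹ := by
    rw [add_comm (D : ℤ) i, htranslate]
  simp only [h2] at this
  rw [← wrap_inv, this]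
  ring

theorem IsTwist.const_of_odd {x z : ℤ → L} (hz : IsTwist D 2 x z) (hx : ∀ i, x i ≠ 0)
    (hper : Function.Periodic x (2 * D : ℕ)) (hD : Odd D) (i : ℤ) : z i = z 0 := by
  have hzD (i : ℤ) : z i * z (i + D) = 1 := by
    refine mul_left_cancel₀ (hx i) ?_
    rw [← mul_assoc, ← hz.translate, ← hz.translate, mul_one, add_assoc, ← two_mul]
    exact_mod_cast hper i
  obtain ⟨d, rfl⟩ := hD
  have hstep (i : ℤ) : z (i + 1) = z i := by
    have hzi := hzD i
    have : z (i + (2 * d + 1 : ℕ)) = z (i + 1) := by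
      rw [show (i + (2 * d + 1 : ℕ) : ℤ) = i + 1 + d * 2 by push_cast; ring]
      exact hz.periodic.int_mul d _
    rw [this, ← hz.pow_eq_one i, sq] at hzi
    exact mul_left_cancel₀ (left_ne_zero_of_mul_eq_one (hzD i)) hzi
  have : Function.Periodic z 1 := hstep
  simpa using this.int_mul i 0

theorem corr_wrap_inv_ne_zero_of_forall_add_eq_mul {x : ℤ → ℂ} {c : ℂ} (hx : ∀ i, ‖x i‖ = 1)
    (hc : ∀ i, x (i + D) = x i * c) (hDR : 2 * D < R) :
    corr (wrap R x) (wrap R x)⁻¹ D ≠ 0 := by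
  have hx0 (i : ℤ) : x i ≠ 0 := norm_ne_zero_iff.mp (by rw [hx]; exact one_ne_zero)
  have hnc : ‖c‖ = 1 := by
    have := congrArg norm (hc 0)
    rwa [norm_mul, hx, hx, one_mul, eq_comm] at this
  have hterm (i : ℤ) : x i * (x (i + D))⁻¹ = c⁻¹ := by
    rw [hc, mul_inv, mul_inv_cancel_left₀ (hx0 i)]
  intro h
  rw [← wrap_inv, corr_wrap_natCast x x⁻¹ (by omega)] at h
  simp only [Pi.inv_apply, hterm, Finset.sum_const, Finset.card_range, nsmul_eq_mul] at h
  have hlarge : ‖((R - D : ℕ) : ℂ) * c⁻¹‖ = R - D := by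
    rw [norm_mul, norm_inv, hnc, inv_one, mul_one, Complex.norm_natCast,
      Nat.cast_sub (by omega)]
  have hsmall : ‖∑ i ∈ Finset.range D, x (i + R - D) * (x i)⁻¹‖ ≤ D := by
    refine (norm_sum_le_of_le _ (n := fun _ => 1) fun i _ => ?_).trans (by simp)
    rw [norm_mul, norm_inv, hx, hx, inv_one, one_mul]
  rw [eq_neg_of_add_eq_zero_left h, norm_neg] at hlarge
  have : (2 * D : ℝ) < R := by exact_mod_cast hDR
  linarith

theorem sum_one_add_sum_range_eq_zero {ι : Type*} [CharZero L] [Fintype ι] {x z : ι → ℤ → L}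
    (hX : IsOrthogonalArray fun j => wrap R (x j)) (hz : ∀ j, IsTwist D 2 (x j) (z j))
    (hx : ∀ j i, x j i ≠ 0) (hper : ∀ j, Function.Periodic (x j) (2 * D : ℕ)) (hD : 0 < D)
    (hR : R = 2 * D + 2) : ∑ j, (1 + ∑ i ∈ Finset.range D, x j i * (x j (i + 2))⁻¹) = 0 := by
  have h2 : (2 : ZMod R) ≠ 0 := by
    rw [← Nat.cast_two, Ne, ZMod.natCast_eq_zero_iff]
    exact Nat.not_dvd_of_pos_of_lt two_pos (by omega)
  have hauto := hX.auto 2 h2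
  simp only [corr_wrap_inv_two (hz _) (hx _) (hper _) hR, ← Finset.mul_sum] at hauto
  exact (mul_eq_zero.mp hauto).resolve_left two_ne_zero

theorem subsingleton_and_eq_neg_one_of_sum_one_add_eq_zero {ι : Type*} [Fintype ι] {s : ι → ℂ}
    (hsum : ∑ j, (1 + s j) = 0) {b : ι} (hb : ‖s b‖ ≤ D) (hs : ∀ j ≠ b, s j = D) :
    Subsingleton ι ∧ s b = -1 := by
  have hall (j : ι) : j = b := by
    classical
    by_contra hj
    rw [← Finset.add_sum_erase _ _ (Finset.mem_univ b)] at hsum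
    have hre := congrArg Complex.re hsum
    have hle : (1 + s j).re ≤ ∑ k ∈ Finset.univ.erase b, (1 + s k).re := by
      refine Finset.single_le_sum (f := fun k => (1 + s k).re) (fun k hk => ?_)
        (Finset.mem_erase.mpr ⟨hj, Finset.mem_univ j⟩)
      simp only [hs k (Finset.ne_of_mem_erase hk), Complex.add_re, Complex.one_re,
        Complex.natCast_re]
      positivity
    rw [hs j hj] at hle
    simp only [Complex.add_re, Complex.re_sum, Complex.one_re, Complex.natCast_re,
      Complex.zero_re] at hre hle
    linarith [neg_le_of_abs_le ((Complex.abs_re_le_norm (s b)).trans hb)]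
  have : Subsingleton ι := ⟨fun j k => (hall j).trans (hall k).symm⟩
  rw [Fintype.sum_subsingleton _ b] at hsum
  exact ⟨this, eq_neg_of_add_eq_zero_right hsum⟩

theorem odd_of_sum_range_eq_neg_one [CharZero L] {e : ℕ} {f : ℕ → L}
    (hf : ∀ i, f i ^ 2 ^ e = 1) (h : ∑ i ∈ Finset.range D, f i = -1) : Odd D := by
  obtain ⟨V, hV⟩ := exists_valuationSubring_valuation_natCast_lt_one (L := L) Nat.prime_two
  have := prime_dvd_card_sub_of_sum_eq Nat.prime_two hV (s := Finset.range D) (f := f) (k := -1)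
    (fun i _ => valuation_sub_one_lt_one_of_pow_prime_pow_eq_one Nat.prime_two hV (hf i))
    (by rw [h]; norm_num)
  rw [Finset.card_range] at this
  rw [Nat.odd_iff]
  omega

/-- When `R = 2 * D + 2` the gap of shifts is one too short for the autocorrelation argument. If
column `b` is not `R`-periodic, all the others are, hence are `2`-periodic, and the autocorrelations
at shift `2` leave room for no other column and force `D` to be odd; then the autocorrelation of `b`
at shift `D` is too large to vanish. -/
theorem periodic_length_of_length_eq_two_mul_add_two {ι : Type*} [Fintype ι] {x z : ι → ℤ → ℂ}
    {e : ℕ} (hX : IsOrthogonalArray fun j => wrap R (x j)) (hz : ∀ j, IsTwist D 2 (x j) (z j))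
    (hroot : ∀ j i, x j i ^ 2 ^ e = 1) (hper : ∀ j, Function.Periodic (x j) (2 * D : ℕ))
    (hD : 0 < D) (hR : R = 2 * D + 2) (b : ι) : Function.Periodic (x b) R := by
  by_contra hb
  have hnorm (j : ι) (i : ℤ) : ‖x j i‖ = 1 :=
    Complex.norm_eq_one_of_pow_eq_one (hroot j i) (pow_ne_zero e two_ne_zero)
  have hx (j : ι) (i : ℤ) : x j i ≠ 0 := norm_ne_zero_iff.mp (by rw [hnorm]; exact one_ne_zero)
  have hothers (j : ι) (hj : j ≠ b) : Function.Periodic (x j) R :=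
    (periodic_length_or_periodic_length hX Nat.prime_two
      (Complex.isPrimitiveRoot_exp 2 two_ne_zero) hz hroot ⟨D + 1, by omega⟩ hD
      (by omega) hj).resolve_right hb
  have hshift (j : ι) (hj : j ≠ b) (i : ℤ) : x j i * (x j (i + 2))⁻¹ = 1 := by
    rw [← hper j (i + 2), show i + 2 + ((2 * D : ℕ) : ℤ) = i + R by omega, hothers j hj,
      mul_inv_cancel₀ (hx j i)]
  obtain ⟨_, hsum⟩ := subsingleton_and_eq_neg_one_of_sum_one_add_eq_zero (D := D) (b := b)
    (sum_one_add_sum_range_eq_zero hX hz hx hper hD hR)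
    ((norm_sum_le_of_le _ (n := fun _ => 1) fun i _ => by
      rw [norm_mul, norm_inv, hnorm, hnorm, inv_one, one_mul]).trans (by simp))
    fun j hj => by simp only [hshift j hj, Finset.sum_const, Finset.card_range, nsmul_one]
  have hodd : Odd D := odd_of_sum_range_eq_neg_one (e := e) (fun i => by
    rw [mul_pow, inv_pow, hroot, hroot, inv_one, one_mul]) hsum
  have hDne : (D : ZMod R) ≠ 0 := by
    rw [Ne, ZMod.natCast_eq_zero_iff]
    exact Nat.not_dvd_of_pos_of_lt hD (by omega)
  have hauto := hX.auto D hDne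
  rw [Fintype.sum_subsingleton _ b] at hauto
  refine corr_wrap_inv_ne_zero_of_forall_add_eq_mul (hnorm b) (c := z b 0) (fun i => ?_) (by omega)
    hauto
  rw [(hz b).translate, (hz b).const_of_odd (hx b) (hper b) hodd]

theorem periodic_length_of_prime_pow {ι : Type*} [Fintype ι] {n q e : ℕ} {x : ι → ℤ → ℂ}
    (hx : ∀ j, IsFlooredPhase n (q ^ e) (x j)) (hX : IsOrthogonalArray fun j => wrap R (x j))
    (hn : 0 < n) (hq : q.Prime) (he : e ≠ 0) (hqR : n * q ^ e < R) (j : ι) :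
    Function.Periodic (x j) R := by
  have : Nonempty ι := ⟨j⟩
  have hpow : q ^ e = q ^ (e - 1) * q := (pow_sub_one_mul he q).symm
  choose z hz using fun j => (hx j).exists_isTwist (q ^ (e - 1)) q hpow
  set D := n * q ^ (e - 1)
  have hnK : n * q ^ e = q * D := by rw [hpow]; ring
  have hD : 0 < D := Nat.mul_pos hn (pow_pos hq.pos _)
  have hdvd : q ∣ R :=
    hX.prime_dvd_length hq (fun j t => (hx j).pow_eq_one _) (by nlinarith [hq.two_le])
  have hle : q * D + q ≤ R := by
    obtain ⟨r, rfl⟩ := hdvd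
    have : D < r := Nat.lt_of_mul_lt_mul_left (a := q) (by omega)
    exact Nat.mul_le_mul_left q this
  by_cases hgap : 2 * D + q < R
  · exact periodic_length_of_gap hX hq (Complex.isPrimitiveRoot_exp q hq.ne_zero) hz
      (fun j => (hx j).pow_eq_one) hdvd hD hgap j
  · have hq2 : q = 2 := by
      by_contra hne
      have := hq.two_le
      have : 3 * D ≤ q * D := Nat.mul_le_mul_right D (by omega)
      omega
    subst hq2
    refine periodic_length_of_length_eq_two_mul_add_two hX hz (fun j => (hx j).pow_eq_one)
      (fun j => ?_) hD (by omega) j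
    exact hnK ▸ (hx j).periodic

theorem length_le_mul_of_isOrthogonalArray {ι : Type*} [Fintype ι] [Nonempty ι] {n K : ℕ}
    {x : ι → ℤ → ℂ} (hx : ∀ j, IsFlooredPhase n K (x j))
    (hX : IsOrthogonalArray fun j => wrap R (x j)) (hn : 0 < n) (hK : 0 < K) : R ≤ n * K := by
  by_contra! hnK
  refine not_forall_periodic_length hx hX hn hK hnK fun j => ?_
  rcases eq_one_or_prime_pow_or_two_primes hK.ne' with
    rfl | ⟨q, e, hq, he, rfl⟩ | ⟨q, l, hq, hl, hne, hqK, hlK⟩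
  · intro i
    simpa only [pow_one] using ((hx j).pow_eq_one _).trans ((hx j).pow_eq_one i).symm
  · exact periodic_length_of_prime_pow hx hX hn hq he hnK j
  · exact periodic_length_of_two_primes hx hX hn hK.ne' hnK hq hl hne hqK hlK j

end Exceptional

section FlooredArray

theorem corr_wrap_inv_eq_xcorr {R : ℕ} [NeZero R] {x y : ℤ → ℂ} (hy : ∀ i, ‖y i‖ = 1)
    (τ : ZMod R) : corr (wrap R x) (wrap R y)⁻¹ τ =
      xcorr R (fun i => x i) (fun i => y i) τ.val := by
  rw [corr, sum_zmod_eq_sum_range]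
  refine Finset.sum_congr rfl fun i hi => ?_
  have hval : (i : ZMod R).val = i := ZMod.val_natCast_of_lt (Finset.mem_range.mp hi)
  rw [Pi.inv_apply, wrap, wrap, ZMod.val_add, hval, Complex.inv_eq_conj (hy _)]

theorem AOP.isOrthogonalArray {R C : ℕ} [NeZero R] {x : ℤ → ℤ → ℂ} (hx : ∀ j i, ‖x j i‖ = 1)
    (h : AOP R C fun i j => x j i) : IsOrthogonalArray fun j : Fin C => wrap R (x j) where
  ne_zero j t := norm_ne_zero_iff.mp ((hx _ _).trans_ne one_ne_zero)
  cross j k hjk τ := by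
    rw [corr_wrap_inv_eq_xcorr (hx _)]
    exact h.1 _ _ _ j.2 k.2 (Fin.val_ne_of_ne hjk)
  auto τ hτ := by
    simp only [corr_wrap_inv_eq_xcorr (hx _)]
    rw [Fin.sum_univ_eq_sum_range fun j => xcorr R (fun i => x j i) (fun i => x j i) τ.val]
    exact h.2 _ fun hdvd =>
      hτ ((ZMod.val_eq_zero τ).mp (Nat.eq_zero_of_dvd_of_lt hdvd τ.val_lt))

theorem le_of_AOP_of_column_eq {R C N : ℕ} {S : ℕ → ℕ → ℂ} (hR : R ≠ 0) (hN : N ≠ 0)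
    (hS : ∀ i j, ‖S i j‖ = 1) (h : AOP R C S) (hcol : ∀ i, S i N = S i 0) : C ≤ N := by
  by_contra! hNC
  have hzero := h.1 0 0 N (by omega) hNC hN.symm
  have hterm (i : ℕ) (hi : i ∈ Finset.range R) :
      S i 0 * starRingEnd ℂ (S ((i + 0) % R) N) = 1 := by
    rw [add_zero, Nat.mod_eq_of_lt (Finset.mem_range.mp hi), hcol, Complex.mul_conj',
      hS, Complex.ofReal_one, one_pow]
  rw [xcorr, Finset.sum_congr rfl hterm, Finset.sum_const, Finset.card_range, nsmul_one] at hzero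
  exact hR (Nat.cast_eq_zero.mp hzero)

theorem isFlooredPhase_zpow_mvPolynomial {L σ : Type*} [Field L] {ω : L} {n K : ℕ} (hn : n ≠ 0)
    (hω : ω ^ K = 1) (hω₀ : ω ≠ 0) (p : MvPolynomial σ ℤ) (f : σ → Polynomial ℤ) :
    IsFlooredPhase n K fun i => ω ^ (MvPolynomial.eval (fun k => (f k).eval i) p / (n : ℤ)) := by
  have heval (i : ℤ) : (MvPolynomial.aeval f p).eval i =
      MvPolynomial.eval (fun k => (f k).eval i) p := by
    rw [← Polynomial.coe_evalRingHom, MvPolynomial.map_aeval]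
    exact congrArg (fun g => MvPolynomial.eval₂Hom g _ p) (Subsingleton.elim _ _)
  simpa only [heval] using isFlooredPhase_zpow_ediv hn hω hω₀ (MvPolynomial.aeval f p)

theorem isFlooredPhase_zpow_fst {L : Type*} [Field L] {ω : L} {n K : ℕ} (hn : n ≠ 0)
    (hω : ω ^ K = 1) (hω₀ : ω ≠ 0) (p : MvPolynomial (Fin 2) ℤ) (j : ℤ) :
    IsFlooredPhase n K fun i => ω ^ (MvPolynomial.eval ![i, j] p / (n : ℤ)) := by
  convert isFlooredPhase_zpow_mvPolynomial hn hω hω₀ p ![Polynomial.X, Polynomial.C j] with i k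
  fin_cases k <;> simp

theorem isFlooredPhase_zpow_snd {L : Type*} [Field L] {ω : L} {n K : ℕ} (hn : n ≠ 0)
    (hω : ω ^ K = 1) (hω₀ : ω ≠ 0) (p : MvPolynomial (Fin 2) ℤ) (i : ℤ) :
    IsFlooredPhase n K fun j => ω ^ (MvPolynomial.eval ![i, j] p / (n : ℤ)) := by
  convert isFlooredPhase_zpow_mvPolynomial hn hω hω₀ p ![Polynomial.C i, Polynomial.X] with j k
  fin_cases k <;> simp

end FlooredArray

theorem aop_floored_bound_general (R C n K : ℕ) (hR : 0 < R) (hC : 0 < C) (hn : 0 < n)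
    (hK : 0 < K) (p : MvPolynomial (Fin 2) ℤ) (ω : ℂ) (hω : ω ^ K = 1) (S : ℕ → ℕ → ℂ)
    (hS : ∀ i j : ℕ,
      S i j = ω ^ (⌊(MvPolynomial.eval ![(i : ℤ), (j : ℤ)] p : ℚ) / n⌋))
    (hAOP : AOP R C S) :
    C ≤ n * K ∧ R ≤ n * K ∧ R * C ≤ n ^ 2 * K ^ 2 := by
  have : NeZero R := ⟨hR.ne'⟩
  have : Nonempty (Fin C) := ⟨⟨0, hC⟩⟩
  have hω₀ : ω ≠ 0 := (IsUnit.of_pow_eq_one hω hK.ne').ne_zero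
  let x (j i : ℤ) : ℂ := ω ^ (MvPolynomial.eval ![i, j] p / (n : ℤ))
  obtain rfl : S = fun i j : ℕ => x j i := by
    ext i j
    rw [hS, Rat.floor_intCast_div_natCast]
  have hfst (j : ℤ) : IsFlooredPhase n K (x j) := isFlooredPhase_zpow_fst hn.ne' hω hω₀ p j
  have hsnd (i : ℤ) : IsFlooredPhase n K (x · i) := isFlooredPhase_zpow_snd hn.ne' hω hω₀ p i
  have hnorm (j i : ℤ) : ‖x j i‖ = 1 :=
    Complex.norm_eq_one_of_pow_eq_one ((hfst j).pow_eq_one i) hK.ne'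
  have hcolumns : C ≤ n * K := le_of_AOP_of_column_eq hR.ne' (Nat.mul_pos hn hK).ne'
    (fun i j => hnorm j i) hAOP fun i => (hsnd i).periodic.eq
  have hrows : R ≤ n * K :=
    length_le_mul_of_isOrthogonalArray (fun j : Fin C => hfst j) (hAOP.isOrthogonalArray hnorm) hn
      hK
  refine ⟨hcolumns, hrows, ?_⟩
  calc R * C ≤ n * K * (n * K) := Nat.mul_le_mul hrows hcolumns
    _ = n ^ 2 * K ^ 2 := by ring

/-- If the `R × C` array `S_{i,j} = ω^{⌊p(i,j)/n⌋}` (with `ω = e^{2πi/K}`,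
`p ∈ ℤ[x,y]`, `n ∈ ℤ⁺`) has the Array Orthogonality Property for divisor `C`, then
`C ≤ nK`, `R ≤ nK`, and hence `L = R·C ≤ n²K²`. -/
theorem aop_floored_bound (R C n K : ℕ) (hR : 0 < R) (hC : 0 < C) (hn : 0 < n)
    (hK : 0 < K) (p : MvPolynomial (Fin 2) ℤ)
    (ω : ℂ) (hω : ω = Complex.exp (2 * Real.pi * Complex.I / K))
    (S : ℕ → ℕ → ℂ)
    (hS : ∀ i j : ℕ,
      S i j = ω ^ (⌊(MvPolynomial.eval ![(i : ℤ), (j : ℤ)] p : ℚ) / n⌋))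
    (hAOP : AOP R C S) :
    C ≤ n * K ∧ R ≤ n * K ∧ R * C ≤ n ^ 2 * K ^ 2 :=
  aop_floored_bound_general R C n K hR hC hn hK p ω
    (hω ▸ (Complex.isPrimitiveRoot_exp K hK.ne').pow_eq_one) S hS hAOP
end
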